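/- arXiv:1604.00530 — 5 statements merged into one kernel-verified Lean document; each statement's English description precedes it below -/
import Mathlib

section
/- Let P be a non-constant complex polynomial and let Π ⊆ ℂ be the convex hull of the set of zeros of P. Then every zero of the derivative P′ lies in Π. Moreover, if w is a zero of P′ belonging to the topological boundary of Π, then either w is a zero of P of multiplicity at least 2, or all zeros of P lie on a single straight line in ℂ. -/
/-!
If `P'(w) = 0` and `P(w) ≠ 0`, the conjugate of `P'(w) / P(w) = ∑ 1 / (w - z)` exhibits `w` as a
mean of the zeros `z` of `P` with *strictly positive* weights. If `w` is not interior to the convex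
hull, then a nonconstant real linear functional attains its maximum over the hull at `w`; a strictly
positive mean attains the maximum only if every point does, so all the zeros lie on the supporting
line through `w`.
-/

open Module Polynomial

section CenterMass

variable {ι : Type*} {t : Finset ι}

theorem eq_centerMass_of_forall_le_centerMass {𝕜 : Type*} [Field 𝕜] [LinearOrder 𝕜]
    [IsStrictOrderedRing 𝕜] {w x : ι → 𝕜} (hw : ∀ i ∈ t, 0 < w i)
    (hx : ∀ i ∈ t, x i ≤ t.centerMass w x) : ∀ i ∈ t, x i = t.centerMass w x := by
  intro i hi
  have hsum_pos : 0 < ∑ j ∈ t, w j := Finset.sum_pos hw ⟨i, hi⟩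
  have hsum : ∑ j ∈ t, w j * x j = ∑ j ∈ t, w j * t.centerMass w x := by
    simp only [← Finset.sum_mul, Finset.centerMass, smul_eq_mul, mul_inv_cancel_left₀ hsum_pos.ne']
  have hterm : ∀ j ∈ t, w j * x j ≤ w j * t.centerMass w x := fun j hj ↦
    mul_le_mul_of_nonneg_left (hx j hj) (hw j hj).le
  exact mul_left_cancel₀ (hw i hi).ne' ((Finset.sum_eq_sum_iff_of_le hterm).1 hsum i hi)

theorem centerMass_mem_interior_convexHull {E : Type*} [AddCommGroup E] [Module ℝ E]
    [TopologicalSpace E] [IsTopologicalAddGroup E] [ContinuousSMul ℝ E] {w : ι → ℝ} {z : ι → E}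
    (hw : ∀ i ∈ t, 0 < w i) (hint : (interior (convexHull ℝ (z '' t))).Nonempty) :
    t.centerMass w z ∈ interior (convexHull ℝ (z '' t)) := by
  by_contra hc
  obtain ⟨f, hf, hle⟩ :=
    geometric_hahn_banach_of_nonempty_interior_point (convex_convexHull ℝ _) hc hint
  have hfc : f (t.centerMass w z) = t.centerMass w (f ∘ z) := by
    simp [Finset.centerMass]
  have hpoints : ∀ i ∈ t, f (z i) = f (t.centerMass w z) := by
    rw [hfc] at hle ⊢
    exact eq_centerMass_of_forall_le_centerMass hw fun i hi ↦
      hle _ (subset_convexHull ℝ _ ⟨i, hi, rfl⟩)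
  have hhull : convexHull ℝ (z '' t) ⊆ f ⁻¹' {f (t.centerMass w z)} :=
    convexHull_min (Set.image_subset_iff.2 hpoints)
      ((convex_singleton _).linear_preimage f.toLinearMap)
  have himage : f '' interior (convexHull ℝ (z '' t)) ⊆ interior {f (t.centerMass w z)} :=
    interior_maximal (Set.image_subset_iff.2 (interior_subset.trans hhull))
      (f.isOpenMap_of_ne_zero hf _ isOpen_interior)
  simpa using (hint.image f).mono himage

end CenterMass

section Collinear

variable {k V P : Type*} [DivisionRing k] [AddCommGroup V] [Module k V] [AddTorsor V P]

theorem affineSpan_eq_top_of_not_collinear (hV : finrank k V = 2) {s : Set P}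
    (hs : ¬Collinear k s) : affineSpan k s = ⊤ := by
  have : FiniteDimensional k V := .of_finrank_eq_succ hV
  have hne : s.Nonempty := by
    rw [Set.nonempty_iff_ne_empty]
    rintro rfl
    exact hs (collinear_empty k P)
  rw [collinear_iff_finrank_le_one, not_le] at hs
  rw [AffineSubspace.affineSpan_eq_top_iff_vectorSpan_eq_top_of_nonempty k V P hne]
  exact Submodule.eq_top_of_finrank_eq
    (le_antisymm (Submodule.finrank_le _) (hV.trans_le hs))

theorem exists_ne_zero_eq_smul_vadd_of_collinear [Nontrivial V] {s : Set P} (hs : Collinear k s) :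
    ∃ (p₀ : P) (v : V), v ≠ 0 ∧ ∀ p ∈ s, ∃ r : k, p = r • v +ᵥ p₀ := by
  obtain ⟨p₀, v, hv⟩ := (collinear_iff_exists_forall_eq_smul_vadd s).1 hs
  obtain rfl | hv₀ := eq_or_ne v 0
  · obtain ⟨u, hu⟩ := exists_ne (0 : V)
    exact ⟨p₀, u, hu, fun p hp ↦ ⟨0, by simpa using hv p hp⟩⟩
  · exact ⟨p₀, v, hv₀, hv⟩

end Collinear

section Roots

variable {P : ℂ[X]} {w : ℂ}

theorem derivRootWeight_pos (hw : P.eval w ≠ 0) {z : ℂ} (hz : z ∈ P.roots) :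
    0 < P.derivRootWeight w z := by
  have hwz : w - z ≠ 0 := sub_ne_zero.2 fun h ↦ hw (h ▸ isRoot_of_mem_roots hz)
  have hmult : 0 < P.rootMultiplicity z := by rwa [← count_roots, Multiset.count_pos]
  rw [derivRootWeight, if_neg hw]
  positivity

theorem mem_interior_convexHull_rootSet_of_eval_derivative_eq_zero (hP : 0 < P.degree)
    (hw' : P.derivative.eval w = 0) (hw : P.eval w ≠ 0) (hcol : ¬Collinear ℝ (P.rootSet ℂ)) :
    w ∈ interior (convexHull ℝ (P.rootSet ℂ)) := by
  have hroots : P.rootSet ℂ = id '' (P.roots.toFinset : Set ℂ) := by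
    simp [rootSet_def, aroots_def]
  have hint : (interior (convexHull ℝ (P.rootSet ℂ))).Nonempty :=
    interior_convexHull_nonempty_iff_affineSpan_eq_top.2
      (affineSpan_eq_top_of_not_collinear Complex.finrank_real_complex hcol)
  rw [eq_centerMass_of_eval_derivative_eq_zero hP hw']
  rw [hroots] at hint ⊢
  exact centerMass_mem_interior_convexHull
    (fun z hz ↦ derivRootWeight_pos hw (Multiset.mem_toFinset.1 hz)) hint

end Roots

/-- **Lucas's theorem** (Gauss–Lucas): the zeroes of the derivative of a non-constant
complex polynomial `P` lie in the convex hull `Π` of the set of zeroes of `P`;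
moreover a zero of `P'` lying on the topological boundary of `Π` is either a zero of
`P` of multiplicity at least `2`, or else all the zeroes of `P` are collinear. -/
theorem gauss_lucas
    (P : Polynomial ℂ) (hP : 0 < P.natDegree) :
    (∀ w : ℂ, (Polynomial.derivative P).eval w = 0 →
      w ∈ convexHull ℝ {z : ℂ | P.eval z = 0}) ∧
    (∀ w : ℂ, (Polynomial.derivative P).eval w = 0 →
      w ∈ frontier (convexHull ℝ {z : ℂ | P.eval z = 0}) →
      (P.eval w = 0 ∧ 2 ≤ Polynomial.rootMultiplicity w P) ∨
      (∃ p q : ℂ, q ≠ 0 ∧ ∀ z : ℂ, P.eval z = 0 → ∃ t : ℝ, z = p + (t : ℂ) * q)) := by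
  have hdeg : 0 < P.degree := natDegree_pos_iff_degree_pos.1 hP
  have hP₀ : P ≠ 0 := ne_zero_of_natDegree_gt hP
  have hroots : {z : ℂ | P.eval z = 0} = P.rootSet ℂ := by
    ext z
    simp [mem_rootSet, hP₀]
  rw [hroots]
  refine ⟨fun w hw ↦ ?_, fun w hw hfr ↦ ?_⟩
  · exact rootSet_derivative_subset_convexHull_rootSet hdeg
      (mem_rootSet.2 ⟨derivative_ne_zero.2 hP.ne', by simpa using hw⟩)
  by_cases hPw : P.eval w = 0
  · exact .inl ⟨hPw, (one_lt_rootMultiplicity_iff_isRoot hP₀).2 ⟨hPw, hw⟩⟩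
  have hcol : Collinear ℝ (P.rootSet ℂ) := by
    by_contra h
    exact hfr.2 (mem_interior_convexHull_rootSet_of_eval_derivative_eq_zero hdeg hw hPw h)
  obtain ⟨p, q, hq, hline⟩ := exists_ne_zero_eq_smul_vadd_of_collinear hcol
  refine .inr ⟨p, q, hq, fun z hz ↦ ?_⟩
  simpa [add_comm] using hline z (hroots ▸ hz)
end

section
/- Let N ≥ 3 and let D₁,…,D_J be bounded open connected subsets of ℝ^N with boundaries of class C^{1,α} and pairwise disjoint closures. Set Ω = ℝ^N ∖ (closure(D₁) ∪ … ∪ closure(D_J)) and Γ = ∂Ω. Let u ∈ C¹(closure(Ω)) ∩ C²(Ω) satisfy Δu = 0 in Ω, u = 1 on Γ, and u(x) → 0 as |x| → ∞. If K denotes the convex hull of D₁ ∪ … ∪ D_J, then ∇u(x) ≠ 0 for every x ∈ closure(Ω) not lying in the interior of K; in other words, u has no critical points in the closure of ℝ^N ∖ K. -/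
open Topology Filter

/-- The Laplacian of `f : ℝ^N → ℝ`, as the sum of the unmixed second partial
derivatives in the coordinate directions. -/
noncomputable def lapE {N : ℕ} (f : EuclideanSpace ℝ (Fin N) → ℝ)
    (x : EuclideanSpace ℝ (Fin N)) : ℝ :=
  ∑ i : Fin N,
    fderiv ℝ (fun y => fderiv ℝ f y (EuclideanSpace.single i 1)) x (EuclideanSpace.single i 1)

/-- `D` has boundary of class `C^{1,α}`: near each boundary point, `D` is the sublevel
set and `∂D` the zero level set of a `C¹` function with nonvanishing differential whose
differential is `α`-Hölder continuous. -/
def HasC1AlphaBoundary {N : ℕ} (D : Set (EuclideanSpace ℝ (Fin N))) (α : NNReal) : Prop :=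
  ∀ x ∈ frontier D, ∃ (U : Set (EuclideanSpace ℝ (Fin N))) (f : EuclideanSpace ℝ (Fin N) → ℝ),
    IsOpen U ∧ x ∈ U ∧ ContDiffOn ℝ 1 f U ∧ (∀ y ∈ U, fderiv ℝ f y ≠ 0) ∧
    (∃ C : NNReal, HolderOnWith C α (fun y => fderiv ℝ f y) U) ∧
    (∀ y ∈ U, (y ∈ D ↔ f y < 0)) ∧ (∀ y ∈ U, (y ∈ frontier D ↔ f y = 0))

/-!
If `x` is not interior to `K`, then `K` lies in a closed half-space with `x` on its bounding
hyperplane; let `n` be the normal pointing away from `K` and let `H` be the open half-space on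
the side of `n`, on which `u` is harmonic. Since `u ≤ 1`, comparison with the affine function
`⟪n, · - x⟫` gives `1 - u ≥ c * min 1 ⟪n, · - x⟫` on the closure of `H` for some `c > 0`. If `x`
is a boundary point of `Ω`, this bound already says that `u` decreases strictly along `n`.

If `x` is an interior point of `Ω`, let `σ` be the reflection in the hyperplane. The maximum
principle on `H ∩ σ⁻¹ Ω` gives `u ≤ u ∘ σ` there, hence only `∂ₙu(x) ≤ 0`. To make this strict,
subtract from `u` a small multiple `ε φ` of a negative power of the distance to a point `d` of the
bodies: the power is chosen so that `φ` is subharmonic, its Laplacian decreases with the distance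
to `d`, and `σ` moves `H` towards `d`, so that `u ∘ σ - u - ε (φ ∘ σ - φ)` is superharmonic, while
the bound above absorbs `ε (φ ∘ σ - φ) = O(min 1 ⟪n, · - x⟫)` on the reflected boundary. Therefore
`∂ₙu(x) ≤ ε ∂ₙφ(x) < 0`.
-/

open InnerProductSpace Laplacian Bornology
open scoped RealInnerProductSpace

section SecondDerivativeTest

theorem deriv_deriv_nonneg_of_isLocalMin {g : ℝ → ℝ} {a : ℝ} (hmin : IsLocalMin g a)
    (hcont : ContinuousAt g a) : 0 ≤ deriv (deriv g) a := by
  by_contra! hneg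
  have hmax : IsLocalMax g a := isLocalMax_of_deriv_deriv_neg hneg hmin.deriv_eq_zero hcont
  have hconst : g =ᶠ[𝓝 a] fun _ => g a := by
    filter_upwards [hmin, hmax] with t hge hle using le_antisymm hle hge
  have hzero : deriv (deriv g) a = 0 := by
    rw [hconst.deriv.deriv_eq]
    simp only [deriv_const']
  exact hneg.ne hzero

variable {E : Type*} [NormedAddCommGroup E] [NormedSpace ℝ E] {f : E → ℝ} {x : E}

theorem deriv_deriv_comp_line (hf : ContDiffAt ℝ 2 f x) (v : E) :
    deriv (deriv fun t : ℝ => f (x + t • v)) 0 = fderiv ℝ (fderiv ℝ f) x v v := by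
  set line : ℝ → E := fun t => x + t • v
  have hzero : line 0 = x := by simp [line]
  have hline (t : ℝ) : HasDerivAt line v t := by
    simpa only [one_smul] using ((hasDerivAt_id' t).smul_const v).const_add x
  rw [← hzero] at hf
  have hfirst : deriv (f ∘ line) =ᶠ[𝓝 0] fun t => fderiv ℝ f (line t) v := by
    filter_upwards [(hline 0).continuousAt.eventually (hf.eventually (by simp))] with t ht
    exact ((ht.differentiableAt two_ne_zero).hasFDerivAt.comp_hasDerivAt t (hline t)).deriv
  have hsecond : DifferentiableAt ℝ (fderiv ℝ f) (line 0) :=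
    (hf.fderiv_right (m := 1) (by norm_num)).differentiableAt one_ne_zero
  have happly := ((hsecond.hasFDerivAt.comp_hasDerivAt 0 (hline 0)).clm_apply
    (hasDerivAt_const (0 : ℝ) v)).deriv
  rw [map_zero, add_zero, hzero] at happly
  exact hfirst.deriv_eq.trans happly

theorem fderiv_fderiv_nonneg_of_isLocalMin (hf : ContDiffAt ℝ 2 f x) (hmin : IsLocalMin f x)
    (v : E) : 0 ≤ fderiv ℝ (fderiv ℝ f) x v v := by
  have hline : Tendsto (fun t : ℝ => x + t • v) (𝓝 0) (𝓝 x) :=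
    Continuous.tendsto' (by fun_prop) _ _ (by simp)
  rw [← deriv_deriv_comp_line hf]
  refine deriv_deriv_nonneg_of_isLocalMin ?_ ?_
  · filter_upwards [hline.eventually hmin] with t ht
    simpa using ht
  · exact hf.continuousAt.comp_of_eq (by fun_prop) (by simp)

end SecondDerivativeTest

section Laplacian

variable {E : Type*} [NormedAddCommGroup E] [InnerProductSpace ℝ E]

theorem hasFDerivAt_comp_norm_sub_sq {φ : ℝ → ℝ} {φ' : ℝ} {p y : E}
    (hφ : HasDerivAt φ φ' (‖y - p‖ ^ 2)) :
    HasFDerivAt (fun z => φ (‖z - p‖ ^ 2)) ((2 * φ') • innerSL ℝ (y - p)) y := by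
  have hnorm : HasFDerivAt (fun z => ‖z - p‖ ^ 2) (2 • innerSL ℝ (y - p)) y := by
    simpa using! ((hasFDerivAt_id y).sub_const p).norm_sq
  refine (hφ.comp_hasFDerivAt y hnorm).congr_fderiv ?_
  module

variable [FiniteDimensional ℝ E]

theorem laplacian_eq_sum_fderiv_fderiv {ι : Type*} [Fintype ι] (b : OrthonormalBasis ι ℝ E)
    (f : E → ℝ) (x : E) : Δ f x = ∑ i, fderiv ℝ (fderiv ℝ f) x (b i) (b i) := by
  rw [laplacian_eq_iteratedFDeriv_orthonormalBasis f b]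
  simp [iteratedFDeriv_two_apply]

theorem lapE_eq_laplacian {N : ℕ} {f : EuclideanSpace ℝ (Fin N) → ℝ}
    {x : EuclideanSpace ℝ (Fin N)} (hf : ContDiffAt ℝ 2 f x) : lapE f x = Δ f x := by
  have hdiff : DifferentiableAt ℝ (fderiv ℝ f) x :=
    (hf.fderiv_right (m := 1) (by norm_num)).differentiableAt one_ne_zero
  rw [laplacian_eq_sum_fderiv_fderiv (EuclideanSpace.basisFun (Fin N) ℝ), lapE]
  refine Finset.sum_congr rfl fun i _ => ?_
  rw [(hdiff.hasFDerivAt.clm_apply (hasFDerivAt_const (EuclideanSpace.single i (1 : ℝ)) x)).fderiv]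
  simp

theorem laplacian_nonneg_of_isLocalMin {f : E → ℝ} {x : E} (hf : ContDiffAt ℝ 2 f x)
    (hmin : IsLocalMin f x) : 0 ≤ Δ f x := by
  rw [laplacian_eq_sum_fderiv_fderiv (stdOrthonormalBasis ℝ E)]
  exact Finset.sum_nonneg fun i _ => fderiv_fderiv_nonneg_of_isLocalMin hf hmin _

theorem laplacian_comp_linearIsometryEquiv (L : E ≃ₗᵢ[ℝ] E) (f : E → ℝ) (x : E) :
    Δ (f ∘ L) x = Δ f (L x) := by
  have hsecond : iteratedFDeriv ℝ 2 (f ∘ L) x =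
      (iteratedFDeriv ℝ 2 f (L x)).compContinuousLinearMap fun _ => (L : E →L[ℝ] E) := by
    simpa only [iteratedFDerivWithin_univ, Set.preimage_univ] using!
      L.toContinuousLinearEquiv.iteratedFDerivWithin_comp_right f uniqueDiffOn_univ
        (Set.mem_univ (L x)) 2
  rw [laplacian_eq_iteratedFDeriv_orthonormalBasis (f ∘ L) (stdOrthonormalBasis ℝ E),
    laplacian_eq_iteratedFDeriv_orthonormalBasis f ((stdOrthonormalBasis ℝ E).map L)]
  simp [hsecond, iteratedFDeriv_two_apply]

theorem laplacian_comp_affineIsometryEquiv (A : E ≃ᵃⁱ[ℝ] E) (f : E → ℝ) (x : E) :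
    Δ (f ∘ A) x = Δ f (A x) := by
  have happly (y : E) : A y = A.linearIsometryEquiv y + A 0 := by
    simpa using A.map_vadd 0 y
  have hcomp : f ∘ A = (fun z => f (z + A 0)) ∘ A.linearIsometryEquiv := by
    ext1 y
    exact congrArg f (happly y)
  rw [hcomp, laplacian_comp_linearIsometryEquiv, happly x]
  simp only [laplacian_eq_iteratedFDeriv_stdOrthonormalBasis, iteratedFDeriv_comp_add_right]

theorem laplacian_comp_norm_sub_sq {φ φ' : ℝ → ℝ} {φ'' : ℝ} {p y : E}
    (hφ : ∀ᶠ t in 𝓝 (‖y - p‖ ^ 2), HasDerivAt φ (φ' t) t)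
    (hφ' : HasDerivAt φ' φ'' (‖y - p‖ ^ 2)) :
    Δ (fun z => φ (‖z - p‖ ^ 2)) y =
      4 * φ'' * ‖y - p‖ ^ 2 + 2 * Module.finrank ℝ E * φ' (‖y - p‖ ^ 2) := by
  have hfirst : fderiv ℝ (fun z => φ (‖z - p‖ ^ 2)) =ᶠ[𝓝 y]
      fun z => (2 * φ' (‖z - p‖ ^ 2)) • innerSL ℝ (z - p) := by
    have hcont : ContinuousAt (fun z => ‖z - p‖ ^ 2) y := by fun_prop
    filter_upwards [hcont.eventually hφ] with z hz using (hasFDerivAt_comp_norm_sub_sq hz).fderiv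
  have hsecond := ((hasFDerivAt_comp_norm_sub_sq hφ').const_mul 2).smul
    ((innerSL ℝ).hasFDerivAt.comp y ((hasFDerivAt_id y).sub_const p))
  have hentry (v : E) : fderiv ℝ (fderiv ℝ fun z => φ (‖z - p‖ ^ 2)) y v v =
      4 * φ'' * ⟪y - p, v⟫ ^ 2 + 2 * φ' (‖y - p‖ ^ 2) * ‖v‖ ^ 2 := by
    calc fderiv ℝ (fderiv ℝ fun z => φ (‖z - p‖ ^ 2)) y v v
        = 2 * φ' (‖y - p‖ ^ 2) * ⟪v, v⟫ + 2 * (2 * φ'' * ⟪y - p, v⟫) * ⟪y - p, v⟫ :=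
          congrArg (fun T => T v v) (hfirst.fderiv_eq.trans hsecond.fderiv)
      _ = _ := by rw [real_inner_self_eq_norm_sq]; ring
  let b := stdOrthonormalBasis ℝ E
  simp only [laplacian_eq_sum_fderiv_fderiv b, hentry, b.norm_eq_one, Finset.sum_add_distrib,
    ← Finset.mul_sum, b.sum_sq_inner_left, one_pow, Finset.sum_const, Finset.card_univ,
    Fintype.card_fin, nsmul_eq_mul]
  ring

theorem laplacian_norm_sq (y : E) : Δ (fun z : E => ‖z‖ ^ 2) y = 2 * Module.finrank ℝ E := by
  simpa using laplacian_comp_norm_sub_sq (p := (0 : E)) (y := y)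
    (Eventually.of_forall hasDerivAt_id') (hasDerivAt_const _ (1 : ℝ))

end Laplacian

section MinimumPrinciple

variable {E : Type*} [NormedAddCommGroup E] [InnerProductSpace ℝ E] [FiniteDimensional ℝ E]
  {U : Set E} {f : E → ℝ}

theorem mem_frontier_of_isMinOn_of_laplacian_neg (hU : IsOpen U)
    (hf : ∀ y ∈ U, ContDiffAt ℝ 2 f y) (hlap : ∀ y ∈ U, Δ f y < 0) {y : E}
    (hy : y ∈ closure U) (hmin : IsMinOn f (closure U) y) : y ∈ frontier U := by
  rw [hU.frontier_eq]
  refine ⟨hy, fun hyU => (hlap y hyU).not_ge (laplacian_nonneg_of_isLocalMin (hf y hyU) ?_)⟩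
  exact (hmin.on_subset subset_closure).isLocalMin (hU.mem_nhds hyU)

theorem nonneg_of_laplacian_nonpos_of_isBounded [Nontrivial E] (hU : IsOpen U)
    (hbdd : IsBounded U) (hcont : ContinuousOn f (closure U))
    (hf : ∀ y ∈ U, ContDiffAt ℝ 2 f y) (hlap : ∀ y ∈ U, Δ f y ≤ 0)
    (hfrontier : ∀ y ∈ frontier U, 0 ≤ f y) {x : E} (hx : x ∈ closure U) : 0 ≤ f x := by
  by_contra! hneg
  obtain ⟨R, -, hR⟩ := hbdd.closure.exists_pos_norm_le
  set δ : ℝ := -f x / (R ^ 2 + 1)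
  have hδ : 0 < δ := div_pos (neg_pos.2 hneg) (by positivity)
  have hδR : δ * (R ^ 2 + 1) = -f x := div_mul_cancel₀ _ (by positivity)
  set sq : E → ℝ := fun y => ‖y‖ ^ 2
  have hsq (y : E) : ContDiffAt ℝ 2 sq y := (contDiff_norm_sq ℝ).contDiffAt
  have hδsq (y : E) : ContDiffAt ℝ 2 (δ • sq) y := (hsq y).const_smul δ
  obtain ⟨y, hy, hmin⟩ := hbdd.isCompact_closure.exists_isMinOn (f := f - δ • sq) ⟨x, hx⟩
    (hcont.sub (by fun_prop))
  have hyfr : y ∈ frontier U := by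
    refine mem_frontier_of_isMinOn_of_laplacian_neg (f := f - δ • sq) hU
      (fun z hz => (hf z hz).sub (hδsq z)) (fun z hz => ?_) hy hmin
    rw [(hf z hz).laplacian_sub (hδsq z), laplacian_smul δ (hsq z),
      laplacian_norm_sq, smul_eq_mul]
    have hfinrank : (0 : ℝ) < Module.finrank ℝ E := mod_cast Module.finrank_pos
    linarith [hlap z hz, mul_pos hδ hfinrank]
  have hyx : f y - δ * ‖y‖ ^ 2 ≤ f x - δ * ‖x‖ ^ 2 := hmin hx
  have hyR : δ * ‖y‖ ^ 2 ≤ δ * R ^ 2 := by gcongr; exact hR y hy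
  linarith [hfrontier y hyfr, mul_nonneg hδ.le (sq_nonneg ‖x‖)]

theorem nonneg_of_laplacian_nonpos [Nontrivial E] {l : ℝ} (hU : IsOpen U)
    (hcont : ContinuousOn f (closure U)) (hf : ∀ y ∈ U, ContDiffAt ℝ 2 f y)
    (hlap : ∀ y ∈ U, Δ f y ≤ 0) (hfrontier : ∀ y ∈ frontier U, 0 ≤ f y) (hl : 0 ≤ l)
    (hlim : Tendsto f (cocompact E ⊓ 𝓟 U) (𝓝 l)) {x : E} (hx : x ∈ closure U) : 0 ≤ f x := by
  refine le_of_forall_pos_le_add fun η hη => ?_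
  have hfar : ∀ᶠ y in cobounded E, y ∈ U → -η < f y := by
    rw [Metric.cobounded_eq_cocompact, ← eventually_inf_principal]
    exact hlim.eventually_const_lt (by linarith)
  obtain ⟨R, -, hR⟩ := (Metric.hasBasis_cobounded_compl_ball (0 : E)).eventually_iff.1 hfar
  set B : Set E := Metric.ball 0 (max R (‖x‖ + 1))
  have hxB : x ∈ closure (U ∩ B) := Metric.isOpen_ball.closure_inter ⟨hx, by simp⟩
  have hUB : IsOpen (U ∩ B) := hU.inter Metric.isOpen_ball
  have hclosure : closure (U ∩ B) ⊆ closure U := closure_mono Set.inter_subset_left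
  refine nonneg_of_laplacian_nonpos_of_isBounded (f := f + fun _ => η) hUB
    (Metric.isBounded_ball.subset Set.inter_subset_right)
    ((hcont.mono hclosure).add continuousOn_const)
    (fun y hy => (hf y hy.1).add contDiffAt_const) (fun y hy => ?_) (fun y hy => ?_) hxB
  · rw [(hf y hy.1).laplacian_add contDiffAt_const]
    simpa using hlap y hy.1
  · rw [hUB.frontier_eq] at hy
    by_cases hyU : y ∈ U
    · have hyR : y ∈ (Metric.ball 0 R)ᶜ := fun hyR =>
        hy.2 ⟨hyU, Metric.ball_subset_ball (le_max_left _ _) hyR⟩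
      exact (neg_lt_iff_pos_add.1 (hR hyR hyU)).le
    · exact add_nonneg (hfrontier y (hU.frontier_eq ▸ ⟨hclosure hy.1, hyU⟩)) hη.le

end MinimumPrinciple

section Reflection

variable {E : Type*} [NormedAddCommGroup E] [InnerProductSpace ℝ E] [FiniteDimensional ℝ E]

/-- The reflection of `E` in the hyperplane through `x` orthogonal to `n`; if `n = 0`, the
identity. -/
noncomputable def hyperplaneReflection (x n : E) : E ≃ᵃⁱ[ℝ] E :=
  EuclideanGeometry.reflection (AffineSubspace.mk' x (ℝ ∙ n)ᗮ)

variable (x n y : E)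

theorem coe_hyperplaneReflection :
    ⇑(hyperplaneReflection x n) = fun y => (ℝ ∙ n)ᗮ.reflection (y - x) + x := by
  ext1 y
  rw [hyperplaneReflection, EuclideanGeometry.reflection_apply_of_mem _ _
    (AffineSubspace.self_mem_mk' x _)]
  simp only [AffineSubspace.direction_mk', vsub_eq_sub, vadd_eq_add]

theorem hyperplaneReflection_apply :
    hyperplaneReflection x n y = y - (2 * ⟪n, y - x⟫ / ‖n‖ ^ 2) • n := by
  simp only [coe_hyperplaneReflection, Submodule.reflection_orthogonal_apply,
    Submodule.reflection_singleton_apply, RCLike.ofReal_real_eq_id, id]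
  module

variable {x n y} in
theorem hyperplaneReflection_eq_self_of_inner_eq_zero (hy : ⟪n, y - x⟫ = 0) :
    hyperplaneReflection x n y = y := by
  rw [hyperplaneReflection_apply, hy, mul_zero, zero_div, zero_smul, sub_zero]

theorem norm_hyperplaneReflection_sub_sq (d : E) :
    ‖hyperplaneReflection x n y - d‖ ^ 2 =
      ‖y - d‖ ^ 2 + 4 * ⟪n, y - x⟫ * ⟪n, d - x⟫ / ‖n‖ ^ 2 := by
  rcases eq_or_ne n 0 with rfl | hn
  · simp [hyperplaneReflection_apply]
  · have hn' : ‖n‖ ≠ 0 := norm_ne_zero_iff.2 hn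
    have hyd : ⟪y - d, n⟫ = ⟪n, y - x⟫ - ⟪n, d - x⟫ := by
      rw [real_inner_comm, ← inner_sub_right, sub_sub_sub_cancel_right]
    rw [hyperplaneReflection_apply, sub_right_comm, norm_sub_sq_real, inner_smul_right, hyd,
      norm_smul, mul_pow, Real.norm_eq_abs, sq_abs]
    field_simp
    ring

theorem hasFDerivAt_hyperplaneReflection :
    HasFDerivAt (hyperplaneReflection x n) ((ℝ ∙ n)ᗮ.reflection : E →L[ℝ] E) y := by
  rw [coe_hyperplaneReflection]
  exact (((ℝ ∙ n)ᗮ.reflection : E →L[ℝ] E).hasFDerivAt.comp y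
    ((hasFDerivAt_id y).sub_const x)).add_const x

theorem contDiff_hyperplaneReflection : ContDiff ℝ 2 (hyperplaneReflection x n) := by
  rw [coe_hyperplaneReflection]
  exact ((LinearIsometryEquiv.contDiff _).comp (contDiff_id.sub contDiff_const)).add contDiff_const

theorem tendsto_hyperplaneReflection_cocompact :
    Tendsto (hyperplaneReflection x n) (cocompact E) (cocompact E) :=
  (hyperplaneReflection x n).toHomeomorph.isClosedEmbedding.tendsto_cocompact

end Reflection

section RadialPower

theorem rpow_sub_rpow_le {a b s : ℝ} (ha : 0 < a) (hb : 0 < b) (hs : s ≤ 0) :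
    a ^ s - b ^ s ≤ -s * a ^ (s - 1) * (b - a) := by
  have hratio : 1 + s * (b / a - 1) ≤ (b / a) ^ s := by
    have hlog := mul_le_mul_of_nonpos_left (Real.log_le_sub_one_of_pos (div_pos hb ha)) hs
    calc 1 + s * (b / a - 1) ≤ s * Real.log (b / a) + 1 := by linarith
      _ ≤ Real.exp (s * Real.log (b / a)) := Real.add_one_le_exp _
      _ = (b / a) ^ s := by rw [Real.rpow_def_of_pos (div_pos hb ha), mul_comm]
  calc a ^ s - b ^ s = a ^ s - a ^ s * (b / a) ^ s := by
        rw [← Real.mul_rpow ha.le (div_pos hb ha).le, mul_div_cancel₀ b ha.ne']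
    _ ≤ a ^ s - a ^ s * (1 + s * (b / a - 1)) := by gcongr
    _ = -s * a ^ (s - 1) * (b - a) := by
        rw [Real.rpow_sub_one ha.ne']
        field_simp
        ring

variable {E : Type*} [NormedAddCommGroup E]

/-- The power `‖y - d‖ ^ (2 * s)` of the distance to the pole `d`. For `s < 0` it is the kernel
subtracted from the capacity potential before reflecting; the base is the squared norm because
that is the quantity which is smooth in `y` and affine in the reflection. At `y = d` it takes
the junk value `0 ^ s`. -/
noncomputable def radialPower (s : ℝ) (d y : E) : ℝ :=
  (‖y - d‖ ^ 2) ^ s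

variable {s : ℝ} {d y : E}

theorem radialPower_nonneg : 0 ≤ radialPower s d y :=
  Real.rpow_nonneg (sq_nonneg _) s

theorem norm_sub_sq_pos (hy : y ≠ d) : 0 < ‖y - d‖ ^ 2 :=
  pow_pos (norm_pos_iff.2 (sub_ne_zero.2 hy)) 2

theorem tendsto_radialPower_cocompact [ProperSpace E] (hs : s < 0) (d : E) :
    Tendsto (radialPower s d) (cocompact E) (𝓝 0) := by
  have hnorm : Tendsto (fun y => ‖y - d‖ ^ 2) (cocompact E) atTop :=
    (tendsto_pow_atTop two_ne_zero).comp <| by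
      simpa only [dist_eq_norm] using tendsto_dist_right_cocompact_atTop d
  simpa only [neg_neg] using! (tendsto_rpow_neg_atTop (neg_pos.2 hs)).comp hnorm

variable [InnerProductSpace ℝ E]

theorem hasFDerivAt_radialPower (hy : y ≠ d) :
    HasFDerivAt (radialPower s d)
      ((2 * (s * (‖y - d‖ ^ 2) ^ (s - 1))) • innerSL ℝ (y - d)) y :=
  hasFDerivAt_comp_norm_sub_sq (Real.hasDerivAt_rpow_const (.inl (norm_sub_sq_pos hy).ne'))

theorem contDiffAt_radialPower {k : WithTop ℕ∞} (hy : y ≠ d) :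
    ContDiffAt ℝ k (radialPower s d) y :=
  ((contDiff_norm_sq ℝ).contDiffAt.comp y (contDiffAt_id.sub contDiffAt_const)).rpow_const_of_ne
    (norm_sub_sq_pos hy).ne'

theorem laplacian_radialPower [FiniteDimensional ℝ E] (hy : y ≠ d) :
    Δ (radialPower s d) y =
      2 * s * (2 * s + Module.finrank ℝ E - 2) * (‖y - d‖ ^ 2) ^ (s - 1) := by
  have hpos : 0 < ‖y - d‖ ^ 2 := norm_sub_sq_pos hy
  have hφ : ∀ᶠ t in 𝓝 (‖y - d‖ ^ 2), HasDerivAt (· ^ s) (s * t ^ (s - 1)) t := by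
    filter_upwards [eventually_ne_nhds hpos.ne'] with t ht
      using Real.hasDerivAt_rpow_const (.inl ht)
  rw [show radialPower s d = fun z => (‖z - d‖ ^ 2) ^ s from rfl, laplacian_comp_norm_sub_sq hφ
    ((Real.hasDerivAt_rpow_const (.inl hpos.ne')).const_mul s)]
  have hpow : (‖y - d‖ ^ 2) ^ (s - 1 - 1) * ‖y - d‖ ^ 2 = (‖y - d‖ ^ 2) ^ (s - 1) := by
    rw [Real.rpow_sub_one hpos.ne' (s - 1), div_mul_cancel₀ _ hpos.ne']
  linear_combination 4 * s * (s - 1) * hpow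

theorem laplacian_sub_smul_radialPower [FiniteDimensional ℝ E] {u : E → ℝ}
    (hu : HarmonicAt u y) (hy : y ≠ d) (ε : ℝ) :
    Δ (u - ε • radialPower s d) y =
      -(ε * (2 * s * (2 * s + Module.finrank ℝ E - 2) * (‖y - d‖ ^ 2) ^ (s - 1))) := by
  have hφ : ContDiffAt ℝ 2 (radialPower s d) y := contDiffAt_radialPower hy
  have hεφ : ContDiffAt ℝ 2 (ε • radialPower s d) y := hφ.const_smul ε
  rw [hu.1.laplacian_sub hεφ, laplacian_smul ε hφ, hu.2.eq_of_nhds, laplacian_radialPower hy,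
    Pi.zero_apply, zero_sub, smul_eq_mul]

section Reflection

variable [FiniteDimensional ℝ E] {x n : E}

theorem norm_hyperplaneReflection_sub_sq_le (hd : ⟪n, d - x⟫ ≤ 0) (hy : 0 ≤ ⟪n, y - x⟫) :
    ‖hyperplaneReflection x n y - d‖ ^ 2 ≤ ‖y - d‖ ^ 2 := by
  rw [norm_hyperplaneReflection_sub_sq]
  have : 4 * ⟪n, y - x⟫ * ⟪n, d - x⟫ / ‖n‖ ^ 2 ≤ 0 :=
    div_nonpos_of_nonpos_of_nonneg (mul_nonpos_of_nonneg_of_nonpos (by positivity) hd)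
      (sq_nonneg _)
  linarith

theorem exists_radialPower_reflection_sub_le {r : ℝ} (hr : 0 < r) (hs : s ≤ 0)
    (hd : ⟪n, d - x⟫ ≤ 0) :
    ∃ C > 0, ∀ y, 0 ≤ ⟪n, y - x⟫ → r ≤ ‖hyperplaneReflection x n y - d‖ →
      radialPower s d (hyperplaneReflection x n y) - radialPower s d y ≤
        C * min 1 ⟪n, y - x⟫ := by
  set C₁ : ℝ := (r ^ 2) ^ s
  set C₂ : ℝ := -s * (r ^ 2) ^ (s - 1) * (4 * -⟪n, d - x⟫ / ‖n‖ ^ 2)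
  have hC : 0 < max C₁ C₂ := lt_max_of_lt_left (Real.rpow_pos_of_pos (by positivity) s)
  refine ⟨max C₁ C₂, hC, fun y hy hσy => ?_⟩
  have hr2 : r ^ 2 ≤ ‖hyperplaneReflection x n y - d‖ ^ 2 := by gcongr
  have hσpos : 0 < ‖hyperplaneReflection x n y - d‖ ^ 2 := (by positivity : 0 < r ^ 2).trans_le hr2
  have hle := norm_hyperplaneReflection_sub_sq_le hd hy
  rw [mul_min_of_nonneg _ _ hC.le, mul_one]
  refine le_min (le_max_of_le_left ?_) ?_
  · calc radialPower s d (hyperplaneReflection x n y) - radialPower s d y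
        ≤ radialPower s d (hyperplaneReflection x n y) := sub_le_self _ radialPower_nonneg
      _ ≤ C₁ := Real.rpow_le_rpow_of_nonpos (by positivity) hr2 hs
  · calc radialPower s d (hyperplaneReflection x n y) - radialPower s d y
        ≤ -s * (‖hyperplaneReflection x n y - d‖ ^ 2) ^ (s - 1) *
            (‖y - d‖ ^ 2 - ‖hyperplaneReflection x n y - d‖ ^ 2) :=
          rpow_sub_rpow_le hσpos (hσpos.trans_le hle) hs
      _ ≤ -s * (r ^ 2) ^ (s - 1) *
            (‖y - d‖ ^ 2 - ‖hyperplaneReflection x n y - d‖ ^ 2) := by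
          have hmono := Real.rpow_le_rpow_of_nonpos (by positivity) hr2 (by linarith : s - 1 ≤ 0)
          exact mul_le_mul_of_nonneg_right (mul_le_mul_of_nonneg_left hmono (neg_nonneg.2 hs))
            (sub_nonneg.2 hle)
      _ = C₂ * ⟪n, y - x⟫ := by
          rw [norm_hyperplaneReflection_sub_sq]
          ring
      _ ≤ max C₁ C₂ * ⟪n, y - x⟫ := by gcongr; exact le_max_right _ _

end Reflection

end RadialPower

section HalfSpace

variable {E : Type*} [NormedAddCommGroup E] [InnerProductSpace ℝ E]

theorem nontrivial_of_inner_pos {v w : E} (h : 0 < ⟪v, w⟫) : Nontrivial E :=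
  nontrivial_of_ne v 0 (by rintro rfl; exact h.ne' (inner_zero_left w))

theorem isOpen_setOf_inner_sub_pos (x n : E) : IsOpen {y | 0 < ⟪n, y - x⟫} :=
  isOpen_lt continuous_const (by fun_prop)

theorem closure_setOf_inner_sub_pos {x n : E} (hn : n ≠ 0) :
    closure {y | 0 < ⟪n, y - x⟫} = {y | 0 ≤ ⟪n, y - x⟫} := by
  refine (closure_lt_subset_le continuous_const (by fun_prop)).antisymm fun y hy => ?_
  have hline : Tendsto (fun t : ℝ => y + t • n) (𝓝[>] 0) (𝓝 y) :=
    (Continuous.tendsto' (by fun_prop) _ _ (by simp)).mono_left nhdsWithin_le_nhds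
  refine mem_closure_of_tendsto hline ?_
  filter_upwards [self_mem_nhdsWithin] with t ht
  have hinner : ⟪n, y + t • n - x⟫ = ⟪n, y - x⟫ + t * ‖n‖ ^ 2 := by
    rw [add_sub_right_comm, inner_add_right, inner_smul_right, real_inner_self_eq_norm_sq]
  have : 0 < t * ‖n‖ ^ 2 := mul_pos ht (by positivity)
  simp only [Set.mem_ofPred_eq] at hy ⊢
  linarith

theorem mem_posTangentConeAt_setOf_inner_sub_nonneg (x n : E) :
    n ∈ posTangentConeAt {y | 0 ≤ ⟪n, y - x⟫} x := by
  refine mem_posTangentConeAt_of_segment_subset ?_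
  rw [segment_eq_image']
  rintro - ⟨t, ht, rfl⟩
  simpa [inner_smul_right] using mul_nonneg ht.1 (sq_nonneg ‖n‖)

theorem exists_inner_sub_neg_of_notMem_convexHull [CompleteSpace E] {D : Set E} {x : E}
    (hD : IsOpen D) (hx : x ∉ convexHull ℝ D) : ∃ n, ∀ y ∈ D, ⟪n, y - x⟫ < 0 := by
  obtain ⟨f, hf⟩ := geometric_hahn_banach_open_point (convex_convexHull ℝ D) hD.convexHull hx
  refine ⟨(toDual ℝ E).symm f, fun y hy => ?_⟩
  rw [toDual_symm_apply, map_sub]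
  exact sub_neg.2 (hf y (subset_convexHull ℝ D hy))

end HalfSpace

section CapacityPotential

variable {E : Type*} [NormedAddCommGroup E] [InnerProductSpace ℝ E] [FiniteDimensional ℝ E]

theorem harmonicOnNhd_inner_sub (x n : E) (s : Set E) :
    HarmonicOnNhd (fun y => ⟪n, y - x⟫) s := by
  have hfirst : fderiv ℝ (fun y => ⟪n, y - x⟫) = fun _ => innerSL ℝ n := by
    ext1 y
    exact ((innerSL ℝ n).hasFDerivAt.comp y ((hasFDerivAt_id y).sub_const x)).fderiv
  refine fun y _ => ⟨contDiffAt_const.inner ℝ (contDiffAt_id.sub contDiffAt_const),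
    Eventually.of_forall fun z => ?_⟩
  simp [laplacian_eq_sum_fderiv_fderiv (stdOrthonormalBasis ℝ E), hfirst]

/-- `u` is the capacity potential of the body whose exterior is `Ω`: it is harmonic in `Ω`,
equal to `1` on the boundary and vanishing at infinity. For open `Ω` only the values of `u`
on `closure Ω` matter. -/
structure IsCapacityPotential (Ω : Set E) (u : E → ℝ) : Prop extends HarmonicContOnCl u Ω where
  eq_one : ∀ x ∈ frontier Ω, u x = 1
  tendsto_zero : Tendsto u (cocompact E ⊓ 𝓟 Ω) (𝓝 0)

namespace IsCapacityPotential

variable {Ω : Set E} {u : E → ℝ} {x n : E}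

theorem le_one [Nontrivial E] (hu : IsCapacityPotential Ω u) (hΩ : IsOpen Ω) {y : E}
    (hy : y ∈ closure Ω) : u y ≤ 1 := by
  have hharm : HarmonicContOnCl (fun z => 1 - u z) Ω := hu.fun_const_sub 1
  refine sub_nonneg.1 <| nonneg_of_laplacian_nonpos hΩ hharm.continuousOn
    (fun z hz => hharm.contDiffAt hz) (fun z hz => (hharm.1 z hz).2.eq_of_nhds.le)
    (fun z hz => (sub_eq_zero.2 (hu.eq_one z hz).symm).ge) zero_le_one ?_ hy
  simpa only [sub_zero] using hu.tendsto_zero.const_sub 1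

theorem exists_le_half_of_le_dist (hu : IsCapacityPotential Ω u) (x : E) :
    ∃ R > 0, ∀ y ∈ Ω, R ≤ ‖y - x‖ → u y ≤ 1 / 2 := by
  have hfar : ∀ᶠ y in cobounded E, y ∈ Ω → u y ≤ 1 / 2 := by
    rw [Metric.cobounded_eq_cocompact, ← eventually_inf_principal]
    exact hu.tendsto_zero.eventually_le_const one_half_pos
  obtain ⟨R, -, hR⟩ := (Metric.hasBasis_cobounded_compl_ball x).eventually_iff.1 hfar
  refine ⟨max R 1, by positivity, fun y hy hyR => hR ?_ hy⟩
  simpa [dist_eq_norm] using (le_max_left R 1).trans hyR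

theorem mul_inner_le_one_sub_of_mem_ball (hu : IsCapacityPotential Ω u)
    (hΩ : IsOpen Ω) (hH : {y | 0 < ⟪n, y - x⟫} ⊆ Ω) {R c : ℝ} (hc : 0 ≤ c)
    (hcR : c * (‖n‖ * R) ≤ 1 / 2) (hfar : ∀ y ∈ Ω, R ≤ ‖y - x‖ → u y ≤ 1 / 2)
    {y : E} (hy : 0 < ⟪n, y - x⟫) (hyR : ‖y - x‖ < R) : c * ⟪n, y - x⟫ ≤ 1 - u y := by
  have : Nontrivial E := nontrivial_of_inner_pos hy
  set V : Set E := {y | 0 < ⟪n, y - x⟫} ∩ Metric.ball x R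
  have hVΩ : V ⊆ Ω := Set.inter_subset_left.trans hH
  have hV : IsOpen V := (isOpen_setOf_inner_sub_pos x n).inter Metric.isOpen_ball
  have hharm : HarmonicContOnCl (fun z => 1 - u z - c • ⟪n, z - x⟫) V :=
    ((hu.mono hVΩ).fun_const_sub 1).fun_sub
      ((harmonicOnNhd_inner_sub x n _).harmonicContOnCl.fun_const_smul c)
  refine sub_nonneg.1 <| nonneg_of_laplacian_nonpos_of_isBounded hV
    (Metric.isBounded_ball.subset Set.inter_subset_right) hharm.continuousOn
    (fun z hz => hharm.contDiffAt hz) (fun z hz => (hharm.1 z hz).2.eq_of_nhds.le)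
    (fun z hz => sub_nonneg.2 ?_) (subset_closure ⟨hy, mem_ball_iff_norm.2 hyR⟩)
  have hz0 : 0 ≤ ⟪n, z - x⟫ := closure_lt_subset_le continuous_const (by fun_prop)
    (closure_mono Set.inter_subset_left hz.1)
  have hzR : ‖z - x‖ ≤ R := mem_closedBall_iff_norm.1 <|
    Metric.closure_ball_subset_closedBall (closure_mono Set.inter_subset_right hz.1)
  rw [smul_eq_mul]
  rcases hz0.eq_or_lt with hz0 | hz0
  · rw [← hz0, mul_zero]
    exact sub_nonneg.2 (hu.le_one hΩ (closure_mono hVΩ hz.1))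
  · have hzR' : R ≤ ‖z - x‖ := by
      by_contra! hlt
      exact (hV.frontier_eq ▸ hz).2 ⟨hz0, mem_ball_iff_norm.2 hlt⟩
    calc c * ⟪n, z - x⟫ ≤ c * (‖n‖ * R) := by
          gcongr
          exact (real_inner_le_norm n _).trans (by gcongr)
      _ ≤ 1 - u z := by linarith [hfar z (hH hz0) hzR']

/-- A quantitative substitute for the Hopf boundary lemma: as the region is a half-space, the
affine function `⟪n, · - x⟫` itself is the barrier. -/
theorem exists_mul_min_inner_le_one_sub (hu : IsCapacityPotential Ω u) (hΩ : IsOpen Ω)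
    (hn : n ≠ 0) (hH : {y | 0 < ⟪n, y - x⟫} ⊆ Ω) :
    ∃ c > 0, ∀ y, 0 ≤ ⟪n, y - x⟫ → c * min 1 ⟪n, y - x⟫ ≤ 1 - u y := by
  have : Nontrivial E := nontrivial_of_ne n 0 hn
  obtain ⟨R, hR, hfar⟩ := hu.exists_le_half_of_le_dist x
  set c : ℝ := (2 * (‖n‖ * R + 1))⁻¹
  have hc : 0 < c := by positivity
  have hcR : c * (‖n‖ * R) + c = 1 / 2 := by
    simp only [c]
    field_simp
  have hnR : 0 ≤ c * (‖n‖ * R) := by positivity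
  refine ⟨c, hc, fun y hy => ?_⟩
  rcases hy.eq_or_lt with hy0 | hy0
  · have hyΩ : y ∈ closure Ω := closure_mono hH ((closure_setOf_inner_sub_pos hn).symm ▸ hy)
    rw [← hy0, min_eq_right zero_le_one, mul_zero]
    exact sub_nonneg.2 (hu.le_one hΩ hyΩ)
  rcases lt_or_ge ‖y - x‖ R with hyR | hyR
  · exact (mul_le_mul_of_nonneg_left (min_le_right _ _) hc.le).trans
      (hu.mul_inner_le_one_sub_of_mem_ball hΩ hH hc.le (by linarith) hfar hy0 hyR)
  · exact (mul_le_mul_of_nonneg_left (min_le_left _ _) hc.le).trans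
      (by linarith [hfar y (hH hy0) hyR])

end IsCapacityPotential

end CapacityPotential

section ReflectionComparison

variable {E : Type*} [NormedAddCommGroup E] [InnerProductSpace ℝ E] [FiniteDimensional ℝ E]
  {Ω : Set E} {x n : E}

theorem le_comp_hyperplaneReflection {v : E → ℝ} {l : ℝ} (hΩ : IsOpen Ω)
    (hH : {y | 0 < ⟪n, y - x⟫} ⊆ Ω) (hcont : ContinuousOn v (closure Ω))
    (hv : ∀ y ∈ Ω, ContDiffAt ℝ 2 v y)
    (hlap : ∀ y, 0 < ⟪n, y - x⟫ → hyperplaneReflection x n y ∈ Ω →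
      Δ v (hyperplaneReflection x n y) ≤ Δ v y)
    (hfrontier : ∀ y, 0 < ⟪n, y - x⟫ → hyperplaneReflection x n y ∈ frontier Ω →
      v y ≤ v (hyperplaneReflection x n y))
    (hlim : Tendsto v (cocompact E ⊓ 𝓟 Ω) (𝓝 l)) {y : E} (hy : 0 ≤ ⟪n, y - x⟫)
    (hσy : hyperplaneReflection x n y ∈ Ω) : v y ≤ v (hyperplaneReflection x n y) := by
  set σ := hyperplaneReflection x n
  rcases hy.eq_or_lt with hy | hy
  · exact (congrArg v (hyperplaneReflection_eq_self_of_inner_eq_zero hy.symm)).ge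
  have : Nontrivial E := nontrivial_of_inner_pos hy
  set W : Set E := {y | 0 < ⟪n, y - x⟫} ∩ σ ⁻¹' Ω
  have hW : IsOpen W := (isOpen_setOf_inner_sub_pos x n).inter (hΩ.preimage σ.continuous)
  have hWΩ : W ⊆ Ω := Set.inter_subset_left.trans hH
  have hσW : Set.MapsTo σ W Ω := fun z hz => hz.2
  have hσv (z : E) (hz : z ∈ W) : ContDiffAt ℝ 2 (v ∘ σ) z :=
    (hv _ hz.2).comp z (contDiff_hyperplaneReflection x n).contDiffAt
  refine sub_nonneg.1 <| nonneg_of_laplacian_nonpos (f := v ∘ σ - v) (U := W) hW ?_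
    (fun z hz => (hσv z hz).sub (hv z (hWΩ hz))) (fun z hz => ?_) (fun z hz => sub_nonneg.2 ?_)
    (sub_self l).ge ?_ (subset_closure ⟨hy, hσy⟩)
  · exact (hcont.comp σ.continuous.continuousOn (hσW.closure σ.continuous)).sub
      (hcont.mono (closure_mono hWΩ))
  · rw [(hσv z hz).laplacian_sub (hv z (hWΩ hz)), laplacian_comp_affineIsometryEquiv]
    exact sub_nonpos.2 (hlap z hz.1 hz.2)
  · have hz0 : 0 ≤ ⟪n, z - x⟫ := closure_lt_subset_le continuous_const (by fun_prop)
      (closure_mono Set.inter_subset_left hz.1)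
    rcases hz0.eq_or_lt with hz0 | hz0
    · exact (congrArg v (hyperplaneReflection_eq_self_of_inner_eq_zero hz0.symm)).ge
    · refine hfrontier z hz0 (hΩ.frontier_eq ▸ ⟨hσW.closure σ.continuous hz.1, fun hσz => ?_⟩)
      exact (hW.frontier_eq ▸ hz).2 ⟨hz0, hσz⟩
  · have hσlim : Tendsto σ (cocompact E ⊓ 𝓟 W) (cocompact E ⊓ 𝓟 Ω) :=
      (tendsto_hyperplaneReflection_cocompact x n).inf (tendsto_principal_principal.2 hσW)
    exact (hlim.comp hσlim).sub (hlim.mono_left (inf_le_inf_left _ (principal_mono.2 hWΩ)))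

theorem fderiv_apply_nonpos_of_le_reflection {v : E → ℝ} {v' : E →L[ℝ] ℝ}
    (hv : HasFDerivAt v v' x)
    (hle : ∀ᶠ y in 𝓝 x, 0 ≤ ⟪n, y - x⟫ → v y ≤ v (hyperplaneReflection x n y)) : v' n ≤ 0 := by
  have hx : hyperplaneReflection x n x = x :=
    hyperplaneReflection_eq_self_of_inner_eq_zero (by rw [sub_self, inner_zero_right])
  have hderiv : HasFDerivAt (v ∘ hyperplaneReflection x n - v)
      (v' ∘L ((ℝ ∙ n)ᗮ.reflection : E →L[ℝ] E) - v') x :=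
    (HasFDerivAt.comp x (hx.symm ▸ hv) (hasFDerivAt_hyperplaneReflection x n x)).sub hv
  have hmin : IsLocalMinOn (v ∘ hyperplaneReflection x n - v) {y | 0 ≤ ⟪n, y - x⟫} x := by
    filter_upwards [mem_nhdsWithin_of_mem_nhds hle, self_mem_nhdsWithin] with y hy hyH
    simpa [hx] using hy hyH
  have hnonneg := hmin.hasFDerivWithinAt_nonneg hderiv.hasFDerivWithinAt
    (mem_posTangentConeAt_setOf_inner_sub_nonneg x n)
  have hreflect : (ℝ ∙ n)ᗮ.reflection n = -n :=
    Submodule.reflection_orthogonalComplement_singleton_eq_neg n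
  have happly : v' ((ℝ ∙ n)ᗮ.reflection n) - v' n = -2 * v' n := by
    rw [hreflect, map_neg]
    ring
  linarith [hnonneg.trans_eq happly]

namespace IsCapacityPotential

variable {u : E → ℝ} {u' : E →L[ℝ] ℝ} {d : E} {r : ℝ}

theorem exists_sub_radialPower_le_reflection (hu : IsCapacityPotential Ω u) (hΩ : IsOpen Ω)
    (hn : n ≠ 0) (hH : {y | 0 < ⟪n, y - x⟫} ⊆ Ω) (hr : 0 < r)
    (hdist : ∀ y ∈ closure Ω, r ≤ ‖y - d‖) (hd : ⟪n, d - x⟫ ≤ 0) {s : ℝ} (hs : s < 0)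
    (hsE : 2 * s + Module.finrank ℝ E ≤ 2) :
    ∃ ε > (0 : ℝ), ∀ y, 0 ≤ ⟪n, y - x⟫ → hyperplaneReflection x n y ∈ Ω →
      (u - ε • radialPower s d) y ≤ (u - ε • radialPower s d) (hyperplaneReflection x n y) := by
  obtain ⟨c, hc, hcu⟩ := hu.exists_mul_min_inner_le_one_sub hΩ hn hH
  obtain ⟨C, hC, hCs⟩ := exists_radialPower_reflection_sub_le hr hs.le hd
  have hne {y : E} (hy : y ∈ closure Ω) : y ≠ d :=
    sub_ne_zero.1 (norm_pos_iff.1 (hr.trans_le (hdist y hy)))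
  have hε : 0 < c / C := div_pos hc hC
  refine ⟨c / C, hε, fun y hy hσy => le_comp_hyperplaneReflection (l := 0) hΩ hH ?_ ?_
    (fun z hz hσz => ?_) (fun z hz hσz => ?_) ?_ hy hσy⟩
  · exact hu.continuousOn.sub (ContinuousOn.const_smul (fun z hz =>
      (contDiffAt_radialPower (k := 0) (hne hz)).continuousAt.continuousWithinAt) (c / C))
  · exact fun z hz => (hu.contDiffAt hz).sub
      ((contDiffAt_radialPower (hne (subset_closure hz))).const_smul (c / C))
  · rw [laplacian_sub_smul_radialPower (hu.harmonicOnNhd _ hσz) (hne (subset_closure hσz)),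
      laplacian_sub_smul_radialPower (hu.harmonicOnNhd z (hH hz)) (hne (subset_closure (hH hz)))]
    have hpow : (‖z - d‖ ^ 2) ^ (s - 1) ≤ (‖hyperplaneReflection x n z - d‖ ^ 2) ^ (s - 1) :=
      Real.rpow_le_rpow_of_nonpos (norm_sub_sq_pos (hne (subset_closure hσz)))
        (norm_hyperplaneReflection_sub_sq_le hd hz.le) (by linarith)
    have hcoeff : 0 ≤ 2 * s * (2 * s + Module.finrank ℝ E - 2) :=
      mul_nonneg_of_nonpos_of_nonpos (by linarith) (by linarith)
    gcongr
  -- On the reflected boundary the loss `ε * (φ (σ z) - φ z)` is paid for by the gap `1 - u z`.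
  · have hφ := mul_le_mul_of_nonneg_left (hCs z hz.le (hdist _ hσz.1)) hε.le
    rw [← mul_assoc, div_mul_cancel₀ c hC.ne', mul_sub] at hφ
    simp only [Pi.sub_apply, Pi.smul_apply, smul_eq_mul, hu.eq_one _ hσz]
    linarith [hcu z hz.le]
  · simpa using! hu.tendsto_zero.sub
      (((tendsto_radialPower_cocompact hs d).mono_left inf_le_left).const_smul (c / C))

theorem hasFDerivWithinAt_apply_neg_of_mem_frontier (hu : IsCapacityPotential Ω u)
    (hΩ : IsOpen Ω) (hn : n ≠ 0) (hH : {y | 0 < ⟪n, y - x⟫} ⊆ Ω) (hx : x ∈ frontier Ω)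
    (hu' : HasFDerivWithinAt u u' (closure Ω) x) : u' n < 0 := by
  obtain ⟨c, hc, hcu⟩ := hu.exists_mul_min_inner_le_one_sub hΩ hn hH
  have hHcl : {y | 0 ≤ ⟪n, y - x⟫} ⊆ closure Ω :=
    closure_setOf_inner_sub_pos hn ▸ closure_mono hH
  have hmin : IsLocalMinOn (fun y => 1 - u y - c * ⟪n, y - x⟫) {y | 0 ≤ ⟪n, y - x⟫} x := by
    have hnear : ∀ᶠ y in 𝓝 x, ⟪n, y - x⟫ < 1 :=
      ContinuousAt.eventually_lt (by fun_prop) continuousAt_const (by simp)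
    filter_upwards [mem_nhdsWithin_of_mem_nhds hnear, self_mem_nhdsWithin] with y hy hyH
    simpa [hu.eq_one x hx, min_eq_right hy.le] using hcu y hyH
  have hderiv : HasFDerivWithinAt (fun y => 1 - u y - c * ⟪n, y - x⟫) (-u' - c • innerSL ℝ n)
      {y | 0 ≤ ⟪n, y - x⟫} x :=
    ((hu'.mono hHcl).const_sub 1).sub (((innerSL ℝ n).hasFDerivAt.comp x
      ((hasFDerivAt_id x).sub_const x)).hasFDerivWithinAt.const_mul c)
  have hnonneg : 0 ≤ -u' n - c * ‖n‖ ^ 2 := by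
    simpa using! hmin.hasFDerivWithinAt_nonneg hderiv
      (mem_posTangentConeAt_setOf_inner_sub_nonneg x n)
  have : 0 < c * ‖n‖ ^ 2 := by positivity
  linarith

theorem hasFDerivAt_apply_neg_of_mem (hu : IsCapacityPotential Ω u) (hΩ : IsOpen Ω)
    (hH : {y | 0 < ⟪n, y - x⟫} ⊆ Ω) (hr : 0 < r) (hdist : ∀ y ∈ closure Ω, r ≤ ‖y - d‖)
    (hd : ⟪n, d - x⟫ < 0) (hx : x ∈ Ω) (hu' : HasFDerivAt u u' x) : u' n < 0 := by
  have hxd : 0 < ⟪x - d, n⟫ := by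
    rwa [real_inner_comm, ← neg_sub, inner_neg_right, neg_pos]
  have : Nontrivial E := nontrivial_of_inner_pos hxd
  have hn : n ≠ 0 := by
    rintro rfl
    exact hxd.ne' (inner_zero_right _)
  have hdim : (0 : ℝ) < Module.finrank ℝ E := mod_cast Module.finrank_pos
  set s : ℝ := -Module.finrank ℝ E
  have hs : s < 0 := neg_lt_zero.2 hdim
  have hsE : 2 * s + Module.finrank ℝ E ≤ 2 := by
    simp only [s]
    linarith
  obtain ⟨ε, hε, hle⟩ := hu.exists_sub_radialPower_le_reflection hΩ hn hH hr hdist hd.le hs hsE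
  have hne : x ≠ d := sub_ne_zero.1 (norm_pos_iff.1 (hr.trans_le (hdist x (subset_closure hx))))
  have hσ : ∀ᶠ y in 𝓝 x, hyperplaneReflection x n y ∈ Ω := by
    refine (hyperplaneReflection x n).continuous.continuousAt.eventually_mem (hΩ.mem_nhds ?_)
    rwa [hyperplaneReflection_eq_self_of_inner_eq_zero (by rw [sub_self, inner_zero_right])]
  have hv := fderiv_apply_nonpos_of_le_reflection
    (hu'.sub ((hasFDerivAt_radialPower (s := s) hne).const_smul ε))
    (hσ.mono fun y hσy hy => hle y hy hσy)
  have hφ : ε * ((2 * (s * (‖x - d‖ ^ 2) ^ (s - 1))) * ⟪x - d, n⟫) < 0 := by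
    have hpow := Real.rpow_pos_of_pos (norm_sub_sq_pos hne) (s - 1)
    refine mul_neg_of_pos_of_neg hε (mul_neg_of_neg_of_pos ?_ hxd)
    linarith [mul_neg_of_neg_of_pos hs hpow]
  exact (sub_nonpos.1 hv).trans_lt hφ

theorem hasFDerivWithinAt_apply_neg (hu : IsCapacityPotential Ω u) (hΩ : IsOpen Ω)
    (hH : {y | 0 < ⟪n, y - x⟫} ⊆ Ω) (hr : 0 < r) (hdist : ∀ y ∈ closure Ω, r ≤ ‖y - d‖)
    (hd : ⟪n, d - x⟫ < 0) (hx : x ∈ closure Ω) (hu' : HasFDerivWithinAt u u' (closure Ω) x) :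
    u' n < 0 := by
  by_cases hxΩ : x ∈ Ω
  · exact hu.hasFDerivAt_apply_neg_of_mem hΩ hH hr hdist hd hxΩ
      (hu'.hasFDerivAt (mem_of_superset (hΩ.mem_nhds hxΩ) subset_closure))
  · have hn : n ≠ 0 := by
      rintro rfl
      exact hd.ne (inner_zero_left _)
    exact hu.hasFDerivWithinAt_apply_neg_of_mem_frontier hΩ hn hH (hΩ.frontier_eq ▸ ⟨hx, hxΩ⟩) hu'

end IsCapacityPotential

end ReflectionComparison

theorem capacity_potential_no_critical_points_outside_convex_hull_general
    {E : Type*} [NormedAddCommGroup E] [InnerProductSpace ℝ E] [FiniteDimensional ℝ E]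
    {D : Set E} (hD : IsOpen D) (hne : D.Nonempty) {u : E → ℝ}
    (hu : IsCapacityPotential (closure D)ᶜ u) {x : E} (hx : x ∈ closure (closure D)ᶜ)
    (hxK : x ∉ convexHull ℝ D) (hdiff : DifferentiableWithinAt ℝ u (closure (closure D)ᶜ) x) :
    fderivWithin ℝ u (closure (closure D)ᶜ) x ≠ 0 := by
  obtain ⟨n, hn⟩ := exists_inner_sub_neg_of_notMem_convexHull hD hxK
  obtain ⟨d, hd⟩ := hne
  obtain ⟨r, hr, hball⟩ := Metric.isOpen_iff.1 hD d hd
  have hD' : closure D ⊆ {y | ⟪n, y - x⟫ ≤ 0} :=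
    closure_minimal (fun y hy => (hn y hy).le) (isClosed_le (by fun_prop) continuous_const)
  have hH : {y | 0 < ⟪n, y - x⟫} ⊆ (closure D)ᶜ := fun y hy hyD =>
    not_le_of_gt hy.out (hD' hyD)
  have hdist (y : E) (hy : y ∈ closure (closure D)ᶜ) : r ≤ ‖y - d‖ := by
    by_contra! hlt
    rw [closure_compl] at hy
    exact hy (interior_mono subset_closure (hD.interior_eq.symm ▸ hball (mem_ball_iff_norm.2 hlt)))
  intro hzero
  have hneg := hu.hasFDerivWithinAt_apply_neg isClosed_closure.isOpen_compl hH hr hdist (hn d hd)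
    hx hdiff.hasFDerivWithinAt
  rw [hzero] at hneg
  exact lt_irrefl 0 hneg

/-- **No equilibrium points outside the convex hull** (Enciso–Peralta-Salas; an analog of
Lucas's theorem).  The capacity potential `u` of finitely many bodies `D₁, …, D_J` in
`ℝ^N`, `N ≥ 3`, has no critical points in `closure Ω` outside the interior of the convex
hull `K` of `D₁ ∪ … ∪ D_J`. -/
theorem capacity_potential_no_critical_points_outside_convex_hull
    (N : ℕ) (hN : 3 ≤ N) (J : ℕ) (hJ : 0 < J)
    (α : NNReal) (hα0 : 0 < α) (hα1 : α < 1)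
    (D : Fin J → Set (EuclideanSpace ℝ (Fin N)))
    (hopen : ∀ j, IsOpen (D j)) (hbdd : ∀ j, Bornology.IsBounded (D j))
    (hconn : ∀ j, IsConnected (D j))
    (hreg : ∀ j, HasC1AlphaBoundary (D j) α)
    (hdisj : ∀ j k, j ≠ k → Disjoint (closure (D j)) (closure (D k)))
    (Ω : Set (EuclideanSpace ℝ (Fin N)))
    (hΩ : Ω = Set.univ \ ⋃ j, closure (D j))
    (u : EuclideanSpace ℝ (Fin N) → ℝ)
    (hu1 : ContDiffOn ℝ 1 u (closure Ω))
    (hu2 : ContDiffOn ℝ 2 u Ω)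
    (hharm : ∀ x ∈ Ω, lapE u x = 0)
    (hbc : ∀ x ∈ frontier Ω, u x = 1)
    (hinfty : Tendsto u (Filter.cocompact (EuclideanSpace ℝ (Fin N))) (𝓝 0)) :
    ∀ x ∈ closure Ω, x ∉ interior (convexHull ℝ (⋃ j, D j)) →
      fderivWithin ℝ u (closure Ω) x ≠ 0 := by
  intro x hx hxK
  have hΩcl : Ω = (closure (⋃ j, D j))ᶜ := by
    rw [hΩ, closure_iUnion_of_finite, Set.compl_eq_univ_sdiff]
  have hΩopen : IsOpen Ω := hΩcl ▸ isClosed_closure.isOpen_compl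
  have hD : IsOpen (⋃ j, D j) := isOpen_iUnion hopen
  have hne : (⋃ j, D j).Nonempty := Set.nonempty_iUnion.2 ⟨⟨0, hJ⟩, (hconn _).nonempty⟩
  have hu2' (y : EuclideanSpace ℝ (Fin N)) (hy : y ∈ Ω) : ContDiffAt ℝ 2 u y :=
    hu2.contDiffAt (hΩopen.mem_nhds hy)
  have hu : IsCapacityPotential Ω u :=
    { harmonicOnNhd := fun y hy => ⟨hu2' y hy, by
        filter_upwards [hΩopen.mem_nhds hy] with z hz
        rw [← lapE_eq_laplacian (hu2' z hz), hharm z hz, Pi.zero_apply]⟩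
      continuousOn := hu1.continuousOn
      eq_one := hbc
      tendsto_zero := hinfty.mono_left inf_le_left }
  rw [hD.convexHull.interior_eq] at hxK
  subst hΩcl
  exact capacity_potential_no_critical_points_outside_convex_hull_general hD hne hu hx hxK
    (hu1.differentiableOn one_ne_zero x hx)
end

section
/- Let Ω ⊂ ℝ^N be a bounded open convex set and let u : closure(Ω) → ℝ be continuous, with u = 0 on ∂Ω, u > 0 in Ω, u real-analytic in Ω, and quasi-concave. Then u attains its maximum over closure(Ω) at exactly one point; i.e., the set {x ∈ closure(Ω) : u(x) = max u} is a singleton. -/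
/-! Along the line through two distinct maximum points, the function is constant on the segment
between them, hence, by the identity theorem and continuity, on the closure of the component of the
line inside `Ω` that contains this segment. The maximum is not taken on the frontier of `Ω`, so this
component has no endpoint and is the whole line, which is impossible in a bounded set. -/

open Set Filter Topology AffineMap

theorem exists_lineMap_notMem_of_isBounded (𝕜 : Type*) {V P : Type*} [NontriviallyNormedField 𝕜]
    [NormedAddCommGroup V] [NormedSpace 𝕜 V] [MetricSpace P] [NormedAddTorsor V P] {s : Set P}
    (hs : Bornology.IsBounded s) {x y : P} (hxy : x ≠ y) :
    ∃ t : 𝕜, lineMap x y t ∉ s :=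
  ((antilipschitzWith_lineMap hxy).tendsto_cobounded.eventually
    (Bornology.isBounded_def.mp hs)).exists

theorem frontier_connectedComponentIn_subset {X : Type*} [TopologicalSpace X]
    [LocallyConnectedSpace X] {U : Set X} (hU : IsOpen U) {x : X} :
    frontier (connectedComponentIn U x) ⊆ frontier U := by
  rw [hU.connectedComponentIn.frontier_eq, hU.frontier_eq]
  refine fun y hy ↦ ⟨closure_mono (connectedComponentIn_subset U x) hy.1, fun hyU ↦ hy.2 ?_⟩
  obtain ⟨z, hzy, hzx⟩ := mem_closure_iff.mp hy.1 _ hU.connectedComponentIn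
    (mem_connectedComponentIn hyU)
  rw [connectedComponentIn_eq hzx, ← connectedComponentIn_eq hzy]
  exact mem_connectedComponentIn hyU

theorem eq_univ_of_eventuallyEq_of_frontier_ne {𝕜 E F : Type*} [NontriviallyNormedField 𝕜]
    [NormedAddCommGroup E] [NormedSpace 𝕜 E] [PreconnectedSpace E] [LocallyConnectedSpace E]
    [NormedAddCommGroup F] [NormedSpace 𝕜 F] {f g : E → F} {U : Set E} (hU : IsOpen U)
    (hf : AnalyticOnNhd 𝕜 f U) (hg : AnalyticOnNhd 𝕜 g U)
    (hfc : ContinuousOn f (closure U)) (hgc : ContinuousOn g (closure U))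
    (hne : ∀ x ∈ frontier U, f x ≠ g x) {x₀ : E} (hx₀ : x₀ ∈ U) (hfg : f =ᶠ[𝓝 x₀] g) :
    U = univ := by
  set C := connectedComponentIn U x₀
  have hCU : C ⊆ U := connectedComponentIn_subset U x₀
  have hx₀C : x₀ ∈ C := mem_connectedComponentIn hx₀
  have heq : EqOn f g C := (hf.mono hCU).eqOn_of_preconnected_of_eventuallyEq (hg.mono hCU)
    isPreconnected_connectedComponentIn hx₀C hfg
  have heq_closure : EqOn f g (closure C) :=
    heq.of_subset_closure (hfc.mono (closure_mono hCU)) (hgc.mono (closure_mono hCU))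
      subset_closure subset_rfl
  have hfrontier : frontier C = ∅ := eq_empty_of_forall_notMem fun x hx ↦
    hne x (frontier_connectedComponentIn_subset hU hx) (heq_closure hx.1)
  have hC : C = univ := (isClopen_iff_frontier_eq_empty.mpr hfrontier).eq_univ ⟨x₀, hx₀C⟩
  exact univ_subset_iff.mp (hC ▸ hCU)

theorem subsingleton_levelSet_of_convex {E F : Type*} [NormedAddCommGroup E] [NormedSpace ℝ E]
    [NormedAddCommGroup F] [NormedSpace ℝ F] {u : E → F} {Ω : Set E} (hΩo : IsOpen Ω)
    (hΩb : Bornology.IsBounded Ω) (hcont : ContinuousOn u (closure Ω))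
    (hanal : AnalyticOnNhd ℝ u Ω) {c : F} (hc : ∀ x ∈ frontier Ω, u x ≠ c)
    (hconv : Convex ℝ {x ∈ closure Ω | u x = c}) :
    {x ∈ closure Ω | u x = c}.Subsingleton := by
  have hΩ : ∀ x ∈ {x ∈ closure Ω | u x = c}, x ∈ Ω := fun x hx ↦ by
    by_contra hxΩ
    exact hc x (hΩo.frontier_eq ▸ ⟨hx.1, hxΩ⟩) hx.2
  intro x hx y hy
  by_contra hxy
  let γ : ℝ → E := lineMap x y
  have hγ : Continuous γ := lineMap_continuous
  have hγ_anal : AnalyticOnNhd ℝ γ (γ ⁻¹' Ω) := fun t _ ↦ by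
    rw [show γ = fun t ↦ t • (y - x) + x from funext (lineMap_apply_module' x y)]
    fun_prop
  have hsegment : ∀ t ∈ Icc (0 : ℝ) 1, γ t ∈ {x ∈ closure Ω | u x = c} :=
    fun t ht ↦ hconv.lineMap_mem hx hy ht
  have hmid : (1 / 2 : ℝ) ∈ Ioo 0 1 := by norm_num
  have hconst : u ∘ γ =ᶠ[𝓝 (1 / 2)] fun _ ↦ c := by
    filter_upwards [Icc_mem_nhds hmid.1 hmid.2] with t ht using (hsegment t ht).2
  have hline : γ ⁻¹' Ω = univ :=
    eq_univ_of_eventuallyEq_of_frontier_ne (hΩo.preimage hγ)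
      (hanal.comp hγ_anal (mapsTo_preimage γ Ω)) analyticOnNhd_const
      (hcont.comp hγ.continuousOn fun t ht ↦ hγ.closure_preimage_subset Ω ht) continuousOn_const
      (fun t ht ↦ hc (γ t) (hγ.frontier_preimage_subset Ω ht))
      (hΩ _ (hsegment _ (Ioo_subset_Icc_self hmid))) hconst
  obtain ⟨t, ht⟩ := exists_lineMap_notMem_of_isBounded ℝ hΩb hxy
  exact ht (eq_univ_iff_forall.mp hline t)

theorem convex_setOf_forall_le_of_quasiconcaveOn {𝕜 E β : Type*} [Semiring 𝕜] [PartialOrder 𝕜]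
    [AddCommMonoid E] [SMul 𝕜 E] [Preorder β] {s : Set E} {f : E → β}
    (hf : QuasiconcaveOn 𝕜 s f) : Convex 𝕜 {x ∈ s | ∀ y ∈ s, f y ≤ f x} :=
  fun x hx _ hy _ _ ha hb hab ↦
    ⟨(hf (f x) ⟨hx.1, le_rfl⟩ ⟨hy.1, hy.2 x hx.1⟩ ha hb hab).1, fun z hz ↦
      (hf (f z) ⟨hx.1, hx.2 z hz⟩ ⟨hy.1, hy.2 z hz⟩ ha hb hab).2⟩

theorem quasiconcave_analytic_unique_maximum_point_general {E : Type*} [NormedAddCommGroup E]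
    [NormedSpace ℝ E] [ProperSpace E] {Ω : Set E} (hΩo : IsOpen Ω)
    (hΩb : Bornology.IsBounded Ω) (hΩne : Ω.Nonempty) {u : E → ℝ}
    (hcont : ContinuousOn u (closure Ω)) (hbc : ∀ x ∈ frontier Ω, ∃ y ∈ Ω, u x < u y)
    (hanal : AnalyticOnNhd ℝ u Ω)
    (hconv : Convex ℝ {x ∈ closure Ω | ∀ y ∈ closure Ω, u y ≤ u x}) :
    ∃! x, x ∈ closure Ω ∧ ∀ y ∈ closure Ω, u y ≤ u x := by
  obtain ⟨x, hx, hmax⟩ := hΩb.isCompact_closure.exists_isMaxOn hΩne.closure hcont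
  have hmax_iff : ∀ y ∈ closure Ω, (∀ z ∈ closure Ω, u z ≤ u y) ↔ u y = u x := fun y hy ↦
    ⟨fun h ↦ (hmax hy).antisymm (h x hx), fun h z hz ↦ h ▸ hmax hz⟩
  have hargmax : {y ∈ closure Ω | ∀ z ∈ closure Ω, u z ≤ u y} = {y ∈ closure Ω | u y = u x} :=
    sep_ext_iff.mpr hmax_iff
  have hfrontier : ∀ y ∈ frontier Ω, u y ≠ u x := fun y hy ↦
    let ⟨_, hz, hyz⟩ := hbc y hy
    (hyz.trans_le (hmax (subset_closure hz))).ne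
  have hunique := subsingleton_levelSet_of_convex hΩo hΩb hcont hanal hfrontier (hargmax ▸ hconv)
  exact ⟨x, ⟨hx, fun _ hy ↦ hmax hy⟩, fun y hy ↦
    hunique ⟨hy.1, (hmax_iff y hy.1).mp hy.2⟩ ⟨hx, rfl⟩⟩

/-- A positive quasi-concave function, real-analytic on a bounded convex open set `Ω`,
continuous up to the boundary and vanishing there, attains its maximum over
`closure Ω` at exactly one point. -/
theorem quasiconcave_analytic_unique_maximum_point
    (N : ℕ) (Ω : Set (EuclideanSpace ℝ (Fin N)))
    (hΩo : IsOpen Ω) (hΩb : Bornology.IsBounded Ω) (hΩconv : Convex ℝ Ω)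
    (hΩne : Ω.Nonempty)
    (u : EuclideanSpace ℝ (Fin N) → ℝ)
    (hcont : ContinuousOn u (closure Ω))
    (hbc : ∀ x ∈ frontier Ω, u x = 0)
    (hpos : ∀ x ∈ Ω, 0 < u x)
    (hanal : AnalyticOnNhd ℝ u Ω)
    (hqc : ∀ s : ℝ, Convex ℝ {x ∈ closure Ω | s ≤ u x}) :
    ∃! x, x ∈ closure Ω ∧ ∀ y ∈ closure Ω, u y ≤ u x := by
  exact quasiconcave_analytic_unique_maximum_point_general hΩo hΩb hΩne hcont
    (fun x hx ↦ hΩne.imp fun p hp ↦ ⟨hp, (hbc x hx).trans_lt (hpos p hp)⟩) hanal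
    (convex_setOf_forall_le_of_quasiconcaveOn hqc)
end

section
/- The function u : ℝ³ → ℝ defined by u(x,y,z) = x² − y² + (x² + y²)·z − (2/3)·z³ is harmonic on ℝ³ (i.e. u_xx + u_yy + u_zz = 0 everywhere), and its critical set {p ∈ ℝ³ : ∇u(p) = 0} is exactly the five-point set {(0,0,0), (0,√2,1), (0,−√2,1), (√2,0,−1), (−√2,0,−1)}. In particular, all critical points of u are isolated, even though the critical set of its lowest-order homogeneous part x² − y² is the whole z-axis. -/
/-!
The gradient of `u` is `(2x(1 + z), 2y(z - 1), x² + y² - 2z²)`. Its first two components force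
`x = y = 0`, or `x = 0` and `z = 1`, or `y = 0` and `z = -1`. In these cases the last one gives
`z = 0`, `y² = 2` and `x² = 2` respectively, so the critical set is finite, hence discrete.
-/

open Topology

section Covector

variable {𝕜 : Type*} [CommSemiring 𝕜] [TopologicalSpace 𝕜] [IsTopologicalSemiring 𝕜]

/-- The covector `a dx + b dy + c dz` on `𝕜³`, used to write differentials in coordinates. -/
def covector (a b c : 𝕜) : 𝕜 × 𝕜 × 𝕜 →L[𝕜] 𝕜 :=
  a • .fst 𝕜 𝕜 (𝕜 × 𝕜) + b • (.fst 𝕜 𝕜 𝕜 ∘L .snd 𝕜 𝕜 (𝕜 × 𝕜)) +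
    c • (.snd 𝕜 𝕜 𝕜 ∘L .snd 𝕜 𝕜 (𝕜 × 𝕜))

@[simp]
theorem covector_apply (a b c : 𝕜) (v : 𝕜 × 𝕜 × 𝕜) :
    covector a b c v = a * v.1 + b * v.2.1 + c * v.2.2 :=
  rfl

theorem covector_eq_zero_iff {a b c : 𝕜} : covector a b c = 0 ↔ a = 0 ∧ b = 0 ∧ c = 0 := by
  refine ⟨fun h => ⟨?_, ?_, ?_⟩, ?_⟩
  · simpa using DFunLike.congr_fun h (1, 0, 0)
  · simpa using DFunLike.congr_fun h (0, 1, 0)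
  · simpa using DFunLike.congr_fun h (0, 0, 1)
  · rintro ⟨rfl, rfl, rfl⟩
    ext <;> simp

end Covector

theorem exists_pos_forall_dist_lt_notMem_of_finite {X : Type*} [MetricSpace X] {s : Set X}
    (hs : s.Finite) (p : X) : ∃ ε > 0, ∀ q, q ≠ p → dist q p < ε → q ∉ s := by
  have hnhds : sᶜ ∈ 𝓝[≠] p := by
    simpa [Set.compl_eq_univ_sdiff] using nhdsNE_of_nhdsNE_sdiff_finite Filter.univ_mem hs
  obtain ⟨ε, hε, hball⟩ := Metric.mem_nhdsWithin_iff.1 hnhds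
  exact ⟨ε, hε, fun q hqp hq => hball ⟨hq, hqp⟩⟩

/-- The function `u(x, y, z) = x² - y² + (x² + y²) z - (2/3) z³` on `𝕜³`. -/
def harmonicCubic {𝕜 : Type*} [Field 𝕜] (p : 𝕜 × 𝕜 × 𝕜) : 𝕜 :=
  p.1 ^ 2 - p.2.1 ^ 2 + (p.1 ^ 2 + p.2.1 ^ 2) * p.2.2 - (2 / 3) * p.2.2 ^ 3

theorem harmonicCubic_critical_equations_iff {R : Type*} [CommRing R] [NoZeroDivisors R]
    [NeZero (2 : R)] {s : R} (hs : s ^ 2 = 2) {x y z : R} :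
    x * (1 + z) = 0 ∧ y * (z - 1) = 0 ∧ x ^ 2 + y ^ 2 = 2 * z ^ 2 ↔
      (x, y, z) ∈ ({(0, 0, 0), (0, s, 1), (0, -s, 1), (s, 0, -1), (-s, 0, -1)} :
        Set (R × R × R)) := by
  have h2 : (2 : R) ≠ 0 := two_ne_zero
  have sq_eq_two {t : R} (ht : t ^ 2 = 2) : t = s ∨ t = -s :=
    sq_eq_sq_iff_eq_or_eq_neg.1 (ht.trans hs.symm)
  simp only [Set.mem_insert_iff, Set.mem_singleton_iff, Prod.mk.injEq]
  constructor
  · rintro ⟨hx, hy, hz⟩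
    rcases mul_eq_zero.1 hx with rfl | hz₁
    · rcases mul_eq_zero.1 hy with rfl | hz₁
      · obtain rfl : z = 0 := by simpa [h2] using hz.symm
        simp
      · obtain rfl : z = 1 := sub_eq_zero.1 hz₁
        rcases sq_eq_two (t := y) (by simpa using hz) with rfl | rfl <;> simp
    · obtain rfl : z = -1 := eq_neg_of_add_eq_zero_right hz₁
      have hy₀ : y = 0 := by
        refine (mul_eq_zero.1 hy).resolve_right fun h => h2 ?_
        linear_combination -h
      subst hy₀
      rcases sq_eq_two (t := x) (by simpa using hz) with rfl | rfl <;> simp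
  · rintro (⟨rfl, rfl, rfl⟩ | ⟨rfl, rfl, rfl⟩ | ⟨rfl, rfl, rfl⟩ | ⟨rfl, rfl, rfl⟩ |
      ⟨rfl, rfl, rfl⟩) <;> simp [hs]

section Differential

variable {𝕜 : Type*} [NontriviallyNormedField 𝕜]

theorem hasFDerivAt_coord_fst (p : 𝕜 × 𝕜 × 𝕜) :
    HasFDerivAt (fun q : 𝕜 × 𝕜 × 𝕜 => q.1) (covector 1 0 0) p :=
  hasFDerivAt_fst.congr_fderiv (by ext <;> simp)

theorem hasFDerivAt_coord_snd (p : 𝕜 × 𝕜 × 𝕜) :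
    HasFDerivAt (fun q : 𝕜 × 𝕜 × 𝕜 => q.2.1) (covector 0 1 0) p :=
  hasFDerivAt_snd.fst.congr_fderiv (by ext <;> simp)

theorem hasFDerivAt_coord_thd (p : 𝕜 × 𝕜 × 𝕜) :
    HasFDerivAt (fun q : 𝕜 × 𝕜 × 𝕜 => q.2.2) (covector 0 0 1) p :=
  hasFDerivAt_snd.snd.congr_fderiv (by ext <;> simp)

theorem hasFDerivAt_fst_sq_sub_snd_sq (p : 𝕜 × 𝕜 × 𝕜) :
    HasFDerivAt (fun q : 𝕜 × 𝕜 × 𝕜 => q.1 ^ 2 - q.2.1 ^ 2)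
      (covector (2 * p.1) (-(2 * p.2.1)) 0) p := by
  have hx := hasFDerivAt_coord_fst p
  have hy := hasFDerivAt_coord_snd p
  refine ((hx.pow 2).fun_sub (hy.pow 2)).congr_fderiv ?_
  ext <;> simp

theorem fderiv_fst_sq_sub_snd_sq_eq_zero_iff [NeZero (2 : 𝕜)] {p : 𝕜 × 𝕜 × 𝕜} :
    fderiv 𝕜 (fun q : 𝕜 × 𝕜 × 𝕜 => q.1 ^ 2 - q.2.1 ^ 2) p = 0 ↔ p.1 = 0 ∧ p.2.1 = 0 := by
  rw [(hasFDerivAt_fst_sq_sub_snd_sq p).fderiv, covector_eq_zero_iff]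
  simp [two_ne_zero]

variable [NeZero (3 : 𝕜)]

theorem hasFDerivAt_harmonicCubic (p : 𝕜 × 𝕜 × 𝕜) :
    HasFDerivAt harmonicCubic
      (covector (2 * (p.1 * (1 + p.2.2))) (2 * (p.2.1 * (p.2.2 - 1)))
        (p.1 ^ 2 + p.2.1 ^ 2 - 2 * p.2.2 ^ 2)) p := by
  have hx := hasFDerivAt_coord_fst p
  have hy := hasFDerivAt_coord_snd p
  have hz := hasFDerivAt_coord_thd p
  have hcube : HasFDerivAt (fun q : 𝕜 × 𝕜 × 𝕜 => 2 / 3 * q.2.2 ^ 3)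
      (covector 0 0 (2 * p.2.2 ^ 2)) p := by
    have h3 : 2 / 3 * (3 * p.2.2 ^ 2) = 2 * p.2.2 ^ 2 := by
      rw [← mul_assoc, div_mul_cancel₀ _ (NeZero.ne 3)]
    refine ((hz.pow 3).const_mul (2 / 3)).congr_fderiv ?_
    ext <;> simp [h3]
  refine (((hasFDerivAt_fst_sq_sub_snd_sq p).fun_add
    (((hx.pow 2).fun_add (hy.pow 2)).fun_mul hz)).fun_sub hcube).congr_fderiv
      (ContinuousLinearMap.ext fun v => ?_)
  simp only [add_apply, sub_apply, smul_apply, covector_apply, smul_eq_mul]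
  ring

theorem laplacian_harmonicCubic_eq_zero (p : 𝕜 × 𝕜 × 𝕜) :
    fderiv 𝕜 (fun q => fderiv 𝕜 harmonicCubic q ((1, 0, 0) : 𝕜 × 𝕜 × 𝕜)) p (1, 0, 0) +
      fderiv 𝕜 (fun q => fderiv 𝕜 harmonicCubic q ((0, 1, 0) : 𝕜 × 𝕜 × 𝕜)) p (0, 1, 0) +
      fderiv 𝕜 (fun q => fderiv 𝕜 harmonicCubic q ((0, 0, 1) : 𝕜 × 𝕜 × 𝕜)) p (0, 0, 1) = 0 := by
  have hx := hasFDerivAt_coord_fst p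
  have hy := hasFDerivAt_coord_snd p
  have hz := hasFDerivAt_coord_thd p
  simp only [(hasFDerivAt_harmonicCubic _).fderiv, covector_apply, mul_one, mul_zero, add_zero,
    zero_add]
  have hxx : fderiv 𝕜 (fun q : 𝕜 × 𝕜 × 𝕜 => 2 * (q.1 * (1 + q.2.2))) p (1, 0, 0) =
      2 * (1 + p.2.2) := by
    rw [((hx.fun_mul (hz.const_add 1)).const_mul 2).fderiv]
    simp
  have hyy : fderiv 𝕜 (fun q : 𝕜 × 𝕜 × 𝕜 => 2 * (q.2.1 * (q.2.2 - 1))) p (0, 1, 0) =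
      2 * (p.2.2 - 1) := by
    rw [((hy.fun_mul (hz.sub_const 1)).const_mul 2).fderiv]
    simp
  have hzz : fderiv 𝕜 (fun q : 𝕜 × 𝕜 × 𝕜 => q.1 ^ 2 + q.2.1 ^ 2 - 2 * q.2.2 ^ 2) p (0, 0, 1) =
      -(2 * (2 * p.2.2)) := by
    rw [(((hx.pow 2).fun_add (hy.pow 2)).fun_sub ((hz.pow 2).const_mul 2)).fderiv]
    simp
  rw [hxx, hyy, hzz]
  ring

variable [NeZero (2 : 𝕜)]

theorem fderiv_harmonicCubic_eq_zero_iff {s : 𝕜} (hs : s ^ 2 = 2) {p : 𝕜 × 𝕜 × 𝕜} :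
    fderiv 𝕜 harmonicCubic p = 0 ↔
      p ∈ ({(0, 0, 0), (0, s, 1), (0, -s, 1), (s, 0, -1), (-s, 0, -1)} : Set (𝕜 × 𝕜 × 𝕜)) := by
  rw [(hasFDerivAt_harmonicCubic p).fderiv, covector_eq_zero_iff,
    ← harmonicCubic_critical_equations_iff hs, sub_eq_zero,
    mul_eq_zero_iff_left two_ne_zero, mul_eq_zero_iff_left two_ne_zero]

theorem harmonic_cubic_five_isolated_critical_points_general {s : 𝕜} (hs : s ^ 2 = 2) :
    (∀ p : 𝕜 × 𝕜 × 𝕜,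
      fderiv 𝕜 (fun q => fderiv 𝕜 harmonicCubic q ((1, 0, 0) : 𝕜 × 𝕜 × 𝕜)) p (1, 0, 0) +
      fderiv 𝕜 (fun q => fderiv 𝕜 harmonicCubic q ((0, 1, 0) : 𝕜 × 𝕜 × 𝕜)) p (0, 1, 0) +
      fderiv 𝕜 (fun q => fderiv 𝕜 harmonicCubic q ((0, 0, 1) : 𝕜 × 𝕜 × 𝕜)) p (0, 0, 1) = 0) ∧
    {p : 𝕜 × 𝕜 × 𝕜 | fderiv 𝕜 harmonicCubic p = 0} =
      {(0, 0, 0), (0, s, 1), (0, -s, 1), (s, 0, -1), (-s, 0, -1)} ∧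
    (∀ p : 𝕜 × 𝕜 × 𝕜, fderiv 𝕜 harmonicCubic p = 0 →
      ∃ ε > 0, ∀ q : 𝕜 × 𝕜 × 𝕜, q ≠ p → dist q p < ε → fderiv 𝕜 harmonicCubic q ≠ 0) ∧
    {p : 𝕜 × 𝕜 × 𝕜 | fderiv 𝕜 (fun q : 𝕜 × 𝕜 × 𝕜 => q.1 ^ 2 - q.2.1 ^ 2) p = 0} =
      {p | p.1 = 0 ∧ p.2.1 = 0} := by
  have hcrit : {p : 𝕜 × 𝕜 × 𝕜 | fderiv 𝕜 harmonicCubic p = 0} =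
      {(0, 0, 0), (0, s, 1), (0, -s, 1), (s, 0, -1), (-s, 0, -1)} :=
    Set.ext fun _ => fderiv_harmonicCubic_eq_zero_iff hs
  have hfin : {p : 𝕜 × 𝕜 × 𝕜 | fderiv 𝕜 harmonicCubic p = 0}.Finite := hcrit ▸ Set.toFinite _
  exact ⟨laplacian_harmonicCubic_eq_zero, hcrit,
    fun p _ => exists_pos_forall_dist_lt_notMem_of_finite hfin p,
    Set.ext fun _ => fderiv_fst_sq_sub_snd_sq_eq_zero_iff⟩

end Differential

/-- The harmonic polynomial `u(x,y,z) = x² − y² + (x²+y²)z − (2/3)z³` on `ℝ³` has exactly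
five critical points, all isolated, although the critical set of its lowest-order
homogeneous part `x² − y²` is the whole `z`-axis. -/
theorem harmonic_cubic_five_isolated_critical_points
    (u : ℝ × ℝ × ℝ → ℝ)
    (hu : u = fun p => p.1 ^ 2 - p.2.1 ^ 2 + (p.1 ^ 2 + p.2.1 ^ 2) * p.2.2
      - (2 / 3) * p.2.2 ^ 3) :
    -- `u` is harmonic on all of `ℝ³`
    (∀ p : ℝ × ℝ × ℝ,
      fderiv ℝ (fun q => fderiv ℝ u q ((1, 0, 0) : ℝ × ℝ × ℝ)) p ((1, 0, 0) : ℝ × ℝ × ℝ) +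
      fderiv ℝ (fun q => fderiv ℝ u q ((0, 1, 0) : ℝ × ℝ × ℝ)) p ((0, 1, 0) : ℝ × ℝ × ℝ) +
      fderiv ℝ (fun q => fderiv ℝ u q ((0, 0, 1) : ℝ × ℝ × ℝ)) p ((0, 0, 1) : ℝ × ℝ × ℝ)
        = 0) ∧
    -- its critical set is exactly the given five-point set
    ({p : ℝ × ℝ × ℝ | fderiv ℝ u p = 0} =
      {(0, 0, 0), (0, Real.sqrt 2, 1), (0, -Real.sqrt 2, 1),
        (Real.sqrt 2, 0, -1), (-Real.sqrt 2, 0, -1)}) ∧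
    -- in particular all critical points of `u` are isolated
    (∀ p : ℝ × ℝ × ℝ, fderiv ℝ u p = 0 →
      ∃ ε > 0, ∀ q : ℝ × ℝ × ℝ, q ≠ p → dist q p < ε → fderiv ℝ u q ≠ 0) ∧
    -- while the critical set of the lowest-order homogeneous part `x² − y²` is the
    -- whole `z`-axis
    ({p : ℝ × ℝ × ℝ | fderiv ℝ (fun q : ℝ × ℝ × ℝ => q.1 ^ 2 - q.2.1 ^ 2) p = 0} =
      {p : ℝ × ℝ × ℝ | p.1 = 0 ∧ p.2.1 = 0}) := by
  obtain rfl : u = harmonicCubic := hu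
  exact harmonic_cubic_five_isolated_critical_points_general (Real.sq_sqrt zero_le_two)
end

section
/- Let B be the open unit ball of ℝ^N and let v ∈ C^∞(B) satisfy ∇v(x) ≠ 0 for every x ∈ B. Define u = 1 + v² and c = Δ(v²)/(1 + v²). Then c ∈ C^∞(B), u satisfies Δu − c·u = 0 in B, and the critical set of u is exactly the zero set of v: {x ∈ B : ∇u(x) = 0} = {x ∈ B : v(x) = 0}. In particular, since the zero set of a C^∞ function can be an arbitrary closed subset of B, the critical set of a solution of an equation Δu − c·u = 0 with smooth coefficient c can be an arbitrary closed subset of B. -/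
/-! Any nowhere-vanishing `u` solves `Δu - c u = 0` with `c = Δu / u`. For `u = 1 + v²` the
denominator is positive and `Δu = Δ(v²)`, while `∇u = 2 v ∇v` vanishes exactly where `v` or
`∇v` does. -/

section Gradient

variable {𝕜 E : Type*} [NontriviallyNormedField 𝕜] [NormedAddCommGroup E] [NormedSpace 𝕜 E]

theorem contDiffOn_fderiv_apply_const {F : Type*} [NormedAddCommGroup F] [NormedSpace 𝕜 F]
    {f : E → F} {U : Set E} {m n : WithTop ℕ∞} (hf : ContDiffOn 𝕜 n f U) (hU : IsOpen U)
    (hmn : m + 1 ≤ n) (w : E) : ContDiffOn 𝕜 m (fun x => fderiv 𝕜 f x w) U :=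
  (hf.fderiv_of_isOpen hU hmn).clm_apply contDiffOn_const

theorem fderiv_const_add_sq_eq_zero_iff [NeZero (2 : 𝕜)] {v : E → 𝕜} {x : E}
    (hv : DifferentiableAt 𝕜 v x) (a : 𝕜) :
    fderiv 𝕜 (fun y => a + v y ^ 2) x = 0 ↔ v x = 0 ∨ fderiv 𝕜 v x = 0 := by
  have hgrad : fderiv 𝕜 (fun y => a + v y ^ 2) x = (2 * v x) • fderiv 𝕜 v x := by
    simpa using ((hv.hasFDerivAt.pow 2).const_add a).fderiv
  rw [hgrad, smul_eq_zero (M := E →L[𝕜] 𝕜), mul_eq_zero_iff_left two_ne_zero]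

end Gradient

section Laplacian

variable {N : ℕ} {f : EuclideanSpace ℝ (Fin N) → ℝ}

theorem contDiffOn_lapE {U : Set (EuclideanSpace ℝ (Fin N))} {m n : WithTop ℕ∞}
    (hf : ContDiffOn ℝ n f U) (hU : IsOpen U) (hmn : m + 2 ≤ n) : ContDiffOn ℝ m (lapE f) U := by
  have hmn' : m + 1 + 1 ≤ n := by rwa [add_assoc, one_add_one_eq_two]
  exact ContDiffOn.sum fun i _ => contDiffOn_fderiv_apply_const
    (contDiffOn_fderiv_apply_const hf hU hmn' _) hU le_rfl _

theorem lapE_const_add (a : ℝ) (x : EuclideanSpace ℝ (Fin N)) :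
    lapE (fun y => a + f y) x = lapE f x := by
  simp only [lapE, fderiv_const_add]

end Laplacian

theorem critical_set_equals_zero_set_of_v_general
    {N : ℕ} {U : Set (EuclideanSpace ℝ (Fin N))} (hU : IsOpen U)
    {m n : WithTop ℕ∞} (hmn : m + 2 ≤ n)
    {v : EuclideanSpace ℝ (Fin N) → ℝ} (hv : ContDiffOn ℝ n v U)
    (hgrad : ∀ x ∈ U, v x ≠ 0 → fderiv ℝ v x ≠ 0)
    {u c : EuclideanSpace ℝ (Fin N) → ℝ}
    (hu : u = fun x => 1 + (v x) ^ 2)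
    (hc : c = fun x => lapE (fun y => (v y) ^ 2) x / (1 + (v x) ^ 2)) :
    ContDiffOn ℝ m c U ∧
    (∀ x ∈ U, lapE u x - c x * u x = 0) ∧
    ({x ∈ U | fderiv ℝ u x = 0} = {x ∈ U | v x = 0}) := by
  subst hu hc
  have hpos (x) : 1 + v x ^ 2 ≠ 0 := by positivity
  have hn : n ≠ 0 := (zero_lt_two.trans_le (le_add_self.trans hmn)).ne'
  refine ⟨?_, fun x _ => ?_, Set.ext fun x => and_congr_right fun hx => ?_⟩
  · have hvm : ContDiffOn ℝ m v U := hv.of_le (le_self_add.trans hmn)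
    exact (contDiffOn_lapE (hv.pow 2) hU hmn).div (contDiffOn_const.add (hvm.pow 2))
      fun x _ => hpos x
  · rw [lapE_const_add, div_mul_cancel₀ _ (hpos x), sub_self]
  · have hvx : DifferentiableAt ℝ v x :=
      (hv.contDiffAt (hU.mem_nhds hx)).differentiableAt hn
    rw [fderiv_const_add_sq_eq_zero_iff hvx]
    exact or_iff_left_of_imp (not_imp_not.mp (hgrad x hx))

/-- **Critical sets of solutions of `Δu − cu = 0` can be arbitrary zero sets**
(Hardt–Hoffmann-Ostenhof–Hoffmann-Ostenhof–Nadirashvili).  If `v ∈ C^∞(B)` has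
non-vanishing gradient in the unit ball `B ⊂ ℝ^N`, then `u = 1 + v²` solves
`Δu − cu = 0` in `B` with the smooth coefficient `c = Δ(v²)/(1 + v²)`, and the critical
set of `u` is exactly the zero set of `v`. -/
theorem critical_set_equals_zero_set_of_v
    (N : ℕ) (B : Set (EuclideanSpace ℝ (Fin N)))
    (hB : B = Metric.ball (0 : EuclideanSpace ℝ (Fin N)) 1)
    (v : EuclideanSpace ℝ (Fin N) → ℝ)
    (hv : ContDiffOn ℝ (⊤ : ℕ∞) v B)
    (hgrad : ∀ x ∈ B, fderiv ℝ v x ≠ 0)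
    (u c : EuclideanSpace ℝ (Fin N) → ℝ)
    (hu : u = fun x => 1 + (v x) ^ 2)
    (hc : c = fun x => lapE (fun y => (v y) ^ 2) x / (1 + (v x) ^ 2)) :
    ContDiffOn ℝ (⊤ : ℕ∞) c B ∧
    (∀ x ∈ B, lapE u x - c x * u x = 0) ∧
    ({x ∈ B | fderiv ℝ u x = 0} = {x ∈ B | v x = 0}) :=
  critical_set_equals_zero_set_of_v_general (hB ▸ Metric.isOpen_ball) le_rfl hv
    (fun x hx _ => hgrad x hx) hu hc
end
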